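/- Suppose that for every z ∈ ℂ a Jost function from the right F_R(·, λ, z) exists. Then for every compact subinterval [X₀, X₁] ⊂ (0, A) there exist constants C > 0 and R > 0 such that for all z ∈ ℂ with |z| ≥ R and all X ∈ [X₀, X₁]: ‖F_{R1}(h(X), λ, z) − (κ_- /a_-)^{iθ}·B_{ν_-}(z, X)·I₂‖ ≤ C·e^{|Re(z)|·X}/|z|; ‖F_{R2}(h(X), λ, z) − i·(κ_- /a_-)^{−iθ}·D_{μ_-}(z, X)·J‖ ≤ C·e^{|Re(z)|·X}/|z|; ‖F_{R3}(h(X), λ, z) − i·(κ_- /a_-)^{iθ}·D_{ν_-}(z, X)·J‖ ≤ C·e^{|Re(z)|·X}/|z|; and ‖F_{R4}(h(X), λ, z) − (κ_- /a_-)^{−iθ}·B_{μ_-}(z, X)·I₂‖ ≤ C·e^{|Re(z)|·X}/|z|, where I₂ is the 2×2 identity matrix, J = [[0, 1], [−1, 0]], and ‖·‖ is the maximum of the entrywise moduli. -/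

import Mathlib

open Asymptotics Filter MeasureTheory Matrix

/-- The Dirac matrix `Γ¹ = diag(1,1,−1,−1)`. -/
noncomputable def Gamma1 : Matrix (Fin 4) (Fin 4) ℂ :=
  !![1, 0, 0, 0; 0, 1, 0, 0; 0, 0, -1, 0; 0, 0, 0, -1]

/-- The Dirac matrix `Γ²`. -/
noncomputable def Gamma2 : Matrix (Fin 4) (Fin 4) ℂ :=
  !![0, 0, 0, 1; 0, 0, -1, 0; 0, -1, 0, 0; 1, 0, 0, 0]

/-- The Dirac matrix `Γ⁰`. -/
noncomputable def Gamma0 : Matrix (Fin 4) (Fin 4) ℂ :=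
  !![0, 0, -Complex.I, 0; 0, 0, 0, Complex.I; Complex.I, 0, 0, 0; 0, -Complex.I, 0, 0]

/-- `e^{Γ¹s} = diag(e^s, e^s, e^{−s}, e^{−s})`, the exponential of `s·Γ¹`. -/
noncomputable def expG1 (s : ℂ) : Matrix (Fin 4) (Fin 4) ℂ :=
  Matrix.diagonal ![Complex.exp s, Complex.exp s, Complex.exp (-s), Complex.exp (-s)]

/-- Entrywise derivative of a matrix-valued function of a real variable. -/
noncomputable def matDeriv (F : ℝ → Matrix (Fin 4) (Fin 4) ℂ) (t : ℝ) :
    Matrix (Fin 4) (Fin 4) ℂ :=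
  Matrix.of fun i j => deriv (fun s => F s i j) t

/-- `F` is a Jost function from the right for the stationary Dirac equation with
potentials `a`, `b`, `c`, phase `C⁻ = Cm`, energy `λ = lam` and angular momentum `z`:
a `C¹` solution of `(−iΓ¹ d/dx − z·a·Γ² + b·Γ⁰ + c)F = λF` with
`e^{iΓ¹C⁻(x)}·F(x)·e^{−iΓ¹λx} → I₄` as `x → −∞`. -/
def IsJostRight (a b c Cm : ℝ → ℝ) (lam : ℝ) (z : ℂ)
    (F : ℝ → Matrix (Fin 4) (Fin 4) ℂ) : Prop :=
  (∀ i j : Fin 4, ContDiff ℝ 1 fun t => F t i j) ∧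
  (∀ t : ℝ, (-Complex.I) • (Gamma1 * matDeriv F t) - (z * ((a t : ℝ) : ℂ)) • (Gamma2 * F t)
      + ((b t : ℝ) : ℂ) • (Gamma0 * F t) + ((c t : ℝ) : ℂ) • F t = ((lam : ℝ) : ℂ) • F t) ∧
  (∀ i j : Fin 4, Filter.Tendsto
      (fun t => (expG1 (Complex.I * ((Cm t : ℝ) : ℂ)) * F t *
        expG1 (-(Complex.I * ((lam : ℝ) : ℂ) * ((t : ℝ) : ℂ)))) i j)
      Filter.atBot (nhds ((1 : Matrix (Fin 4) (Fin 4) ℂ) i j)))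

/-- The `2×2` block of a `4×4` matrix in block position `(p,q)`. -/
def blk (F : Matrix (Fin 4) (Fin 4) ℂ) (p q : Fin 2) : Matrix (Fin 2) (Fin 2) ℂ :=
  Matrix.of fun i j =>
    F ⟨2 * (p : ℕ) + (i : ℕ), by have := p.isLt; have := i.isLt; omega⟩
      ⟨2 * (q : ℕ) + (j : ℕ), by have := q.isLt; have := j.isLt; omega⟩

/-- The maximum of the moduli of the entries of a `2×2` complex matrix. -/
noncomputable def mnorm2 (M : Matrix (Fin 2) (Fin 2) ℂ) : ℝ :=
  max (max (‖M 0 0‖) (‖M 0 1‖))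
      (max (‖M 1 0‖) (‖M 1 1‖))

/-- The matrix `J = [[0,1],[−1,0]]`. -/
noncomputable def Jmat : Matrix (Fin 2) (Fin 2) ℂ := !![0, 1; -1, 0]

/-- `B_ν(z,X) = Γ(1−ν)·Σ_{k≥0} X^{1/2−ν+2k}·(z/2)^{2k}/(Γ(k+1−ν)·k!)`, entire in `z`,
with `X^w = e^{w·log X}`. -/
noncomputable def Bfun (ν z : ℂ) (X : ℝ) : ℂ :=
  Complex.Gamma (1 - ν) * ∑' k : ℕ,
    Complex.exp (((1 : ℂ) / 2 - ν + 2 * (k : ℂ)) * ((Real.log X : ℝ) : ℂ)) * (z / 2) ^ (2 * k)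
      / (Complex.Gamma ((k : ℂ) + 1 - ν) * (Nat.factorial k : ℂ))

/-- `D_ν(z,X) = Γ(1−ν)·Σ_{k≥0} X^{3/2−ν+2k}·(z/2)^{1+2k}/(Γ(k+2−ν)·k!)`, entire in `z`,
with `X^w = e^{w·log X}`. -/
noncomputable def Dfun (ν z : ℂ) (X : ℝ) : ℂ :=
  Complex.Gamma (1 - ν) * ∑' k : ℕ,
    Complex.exp (((3 : ℂ) / 2 - ν + 2 * (k : ℂ)) * ((Real.log X : ℝ) : ℂ)) * (z / 2) ^ (1 + 2 * k)
      / (Complex.Gamma ((k : ℂ) + 2 - ν) * (Nat.factorial k : ℂ))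


lemma energy_aux (a g : ℝ → ℝ) (η : ℝ → ℝ) (z : ℂ) (x1 K G E0 : ℝ)
    (d e ρ1 ρ2 : ℝ → ℂ) (ha : ∀ t, 0 < a t) (hg : ∀ t, HasDerivAt g (a t) t)
    (hgpos : ∀ t, 0 ≤ g t) (hK : 0 ≤ K) (hG : 0 ≤ G) (hE0 : 0 ≤ E0)
    (hd : ∀ t, HasDerivAt d (Complex.I * (η t : ℂ) * d t + z * (a t : ℂ) * e t + ρ1 t) t)
    (he : ∀ t, HasDerivAt e (-(Complex.I * (η t : ℂ)) * e t + z * (a t : ℂ) * d t + ρ2 t) t)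
    (hρ : ∀ t ≤ x1, ‖ρ1 t‖ ^ 2 + ‖ρ2 t‖ ^ 2 ≤
      (a t) ^ 2 * (K * (‖d t‖ ^ 2 + ‖e t‖ ^ 2) + G * Real.exp (2 * |z.re| * g t)))
    (hlim : ∀ᶠ t in atBot, ‖d t‖ ^ 2 + ‖e t‖ ^ 2 ≤ E0) :
    ∀ t ≤ x1, ‖d t‖ ^ 2 + ‖e t‖ ^ 2 ≤ Real.exp ((2 * |z.re| + 1 + K) * g t) * (E0 + G * g t) := by
  set E : ℝ → ℝ := fun t => ‖d t‖ ^ 2 + ‖e t‖ ^ 2 with hE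
  set L : ℝ := 2 * |z.re| + 1 + K with hL
  have hL0 : 0 ≤ L := by positivity
  have hEd : ∀ t, HasDerivAt E (2 * inner ℝ (d t) (Complex.I * (η t : ℂ) * d t + z * (a t : ℂ) * e t + ρ1 t)
      + 2 * inner ℝ (e t) (-(Complex.I * (η t : ℂ)) * e t + z * (a t : ℂ) * d t + ρ2 t)) t := by
    intro t
    exact ((hd t).norm_sq).add ((he t).norm_sq)
  set H : ℝ → ℝ := fun t => E t * Real.exp (-L * g t) - G * g t with hH
  have hHd : ∀ t, HasDerivAt H ((2 * inner ℝ (d t) (Complex.I * (η t : ℂ) * d t + z * (a t : ℂ) * e t + ρ1 t)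
      + 2 * inner ℝ (e t) (-(Complex.I * (η t : ℂ)) * e t + z * (a t : ℂ) * d t + ρ2 t)) * Real.exp (-L * g t)
      + E t * (Real.exp (-L * g t) * (-L * a t)) - G * a t) t := by
    intro t
    exact ((hEd t).mul (((hg t).const_mul (-L)).exp)).sub ((hg t).const_mul G)
  have hanti : AntitoneOn H (Set.Iic x1) := by
    apply antitoneOn_of_deriv_nonpos (convex_Iic x1)
    · exact fun t _ => (hHd t).continuousAt.continuousWithinAt
    · exact fun t _ => (hHd t).differentiableAt.differentiableWithinAt
    · intro t ht
      rw [interior_Iic] at ht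
      rw [(hHd t).deriv]
      have hρt := hρ t (le_of_lt ht)
      have hat := ha t
      have hEn : 0 ≤ E t := by positivity
      -- main bound
      have key : 2 * inner ℝ (d t) (Complex.I * (η t : ℂ) * d t + z * (a t : ℂ) * e t + ρ1 t)
          + 2 * inner ℝ (e t) (-(Complex.I * (η t : ℂ)) * e t + z * (a t : ℂ) * d t + ρ2 t)
          ≤ a t * (L * E t + G * Real.exp (2 * |z.re| * g t)) := by
        have h1 : 2 * inner ℝ (d t) (Complex.I * (η t : ℂ) * d t + z * (a t : ℂ) * e t + ρ1 t)
          + 2 * inner ℝ (e t) (-(Complex.I * (η t : ℂ)) * e t + z * (a t : ℂ) * d t + ρ2 t)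
          = 4 * a t * z.re * ((d t).re * (e t).re + (d t).im * (e t).im)
            + 2 * inner ℝ (d t) (ρ1 t) + 2 * inner ℝ (e t) (ρ2 t) := by
          simp only [Complex.inner, Complex.add_re, Complex.mul_re, Complex.conj_re, Complex.conj_im,
            Complex.I_re, Complex.I_im, Complex.ofReal_re, Complex.ofReal_im, Complex.mul_im,
            Complex.neg_re, Complex.neg_im, Complex.add_im]
          ring
        have h2 : 4 * a t * z.re * ((d t).re * (e t).re + (d t).im * (e t).im)
            ≤ 2 * |z.re| * a t * E t := by
          have hn1 : ‖d t‖ ^ 2 = (d t).re ^ 2 + (d t).im ^ 2 := by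
            rw [← Complex.normSq_eq_norm_sq, Complex.normSq_apply]; ring
          have hn2 : ‖e t‖ ^ 2 = (e t).re ^ 2 + (e t).im ^ 2 := by
            rw [← Complex.normSq_eq_norm_sq, Complex.normSq_apply]; ring
          have h3 : |2 * ((d t).re * (e t).re + (d t).im * (e t).im)| ≤ E t := by
            simp only [hE, hn1, hn2]
            rw [abs_le]; constructor <;>
            nlinarith [sq_nonneg ((d t).re - (e t).re), sq_nonneg ((d t).im - (e t).im),
              sq_nonneg ((d t).re + (e t).re), sq_nonneg ((d t).im + (e t).im)]
          have h4 : z.re * (2 * ((d t).re * (e t).re + (d t).im * (e t).im)) ≤ |z.re| * E t := by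
            refine (le_abs_self _).trans ?_
            rw [abs_mul]; gcongr
          nlinarith
        have cs : ∀ u v : ℂ, 2 * inner ℝ u v ≤ a t * ‖u‖ ^ 2 + ‖v‖ ^ 2 / a t := by
          intro u v
          have h5 : inner ℝ u v ≤ ‖u‖ * ‖v‖ := real_inner_le_norm u v
          have h6 : 2 * (‖u‖ * ‖v‖) ≤ a t * ‖u‖ ^ 2 + ‖v‖ ^ 2 / a t := by
            have h7 : a t * ‖u‖ ^ 2 + ‖v‖ ^ 2 / a t - 2 * (‖u‖ * ‖v‖)
              = (a t * ‖u‖ - ‖v‖) ^ 2 / a t := by field_simp; ring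
            have h8 : 0 ≤ (a t * ‖u‖ - ‖v‖) ^ 2 / a t := by positivity
            linarith
          linarith
        have h5 := cs (d t) (ρ1 t)
        have h6 := cs (e t) (ρ2 t)
        have h7 : ‖ρ1 t‖ ^ 2 / a t + ‖ρ2 t‖ ^ 2 / a t ≤
            a t * (K * E t + G * Real.exp (2 * |z.re| * g t)) := by
          rw [← add_div, div_le_iff₀ hat]
          refine hρt.trans (le_of_eq ?_)
          ring
        have h8 : E t = ‖d t‖ ^ 2 + ‖e t‖ ^ 2 := rfl
        rw [h1, hL]
        have h9 : a t * ((2 * |z.re| + 1 + K) * E t + G * Real.exp (2 * |z.re| * g t))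
          = 2 * |z.re| * a t * E t + (a t * ‖d t‖ ^ 2 + a t * ‖e t‖ ^ 2)
            + a t * (K * E t + G * Real.exp (2 * |z.re| * g t)) := by rw [h8]; ring
        linarith
      have hexp : 0 < Real.exp (-L * g t) := Real.exp_pos _
      have h10 : Real.exp (2 * |z.re| * g t) * Real.exp (-L * g t) ≤ 1 := by
        rw [← Real.exp_add, Real.exp_le_one_iff, hL]
        have := hgpos t
        nlinarith [mul_nonneg hK this]
      have h11 := mul_le_mul_of_nonneg_right key hexp.le
      have h12 : G * a t * (Real.exp (2 * |z.re| * g t) * Real.exp (-L * g t)) ≤ G * a t * 1 := by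
        apply mul_le_mul_of_nonneg_left h10; positivity
      nlinarith
  intro t ht
  have hHt : H t ≤ E0 := by
    obtain ⟨s, hs1, hs2⟩ := (hlim.and (eventually_le_atBot t)).exists
    have h1 := hanti (show s ∈ Set.Iic x1 from hs2.trans ht) (show t ∈ Set.Iic x1 from ht) hs2
    refine h1.trans ?_
    have h2 : E s * Real.exp (-L * g s) ≤ E s * 1 := by
      apply mul_le_mul_of_nonneg_left _ (by positivity)
      rw [Real.exp_le_one_iff]
      nlinarith [mul_nonneg hL0 (hgpos s)]
    have h3 : 0 ≤ G * g s := mul_nonneg hG (hgpos s)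
    simp only [hH]
    have : E s ≤ E0 := hs1
    linarith
  have h4 : E t * Real.exp (-L * g t) ≤ E0 + G * g t := by simp only [hH] at hHt; linarith
  have h5 : E t = Real.exp (L * g t) * (E t * Real.exp (-L * g t)) := by
    rw [mul_comm (E t), ← mul_assoc, ← Real.exp_add]
    rw [show L * g t + -L * g t = 0 by ring]; simp
  change E t ≤ _
  rw [h5]
  exact mul_le_mul_of_nonneg_left h4 (Real.exp_pos _).le


lemma le_of_sq_aux {x y : ℝ} (h : x ^ 2 ≤ y ^ 2) (hy : 0 ≤ y) : x ≤ y :=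
  (le_abs_self x).trans (abs_le_of_sq_le_sq h hy)

set_option maxHeartbeats 1000000 in
lemma core_aux (a g μ μ' p p' ℓ : ℝ → ℝ) (θ x1 K A : ℝ)
    (ha : ∀ t, 0 < a t) (hg : ∀ t, HasDerivAt g (a t) t) (hgpos : ∀ t, 0 < g t)
    (hgA : ∀ t, g t ≤ A) (hK : 0 ≤ K)
    (hμ : ∀ t, HasDerivAt μ (μ' t) t) (hp : ∀ t, HasDerivAt p (p' t) t)
    (hℓ : ∀ t, ℓ t = a t * p t + a t * θ / g t)
    (hμK : ∀ t ≤ x1, |μ t| ≤ K) (hμ'K : ∀ t ≤ x1, |μ' t| ≤ K * a t)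
    (hpK : ∀ t ≤ x1, |p t| ≤ K) (hpg : ∀ t ≤ x1, |p t| ≤ K * g t)
    (hp'K : ∀ t ≤ x1, |p' t| ≤ K * a t) :
    ∃ C > (0 : ℝ), ∀ z : ℂ, 1 ≤ ‖z‖ → ∀ U W u0 w0 : ℝ → ℂ,
      (∀ t, HasDerivAt U (Complex.I * (ℓ t : ℂ) * U t
        + (z * (a t : ℂ) - Complex.I * ((a t * μ t : ℝ) : ℂ)) * W t) t) →
      (∀ t, HasDerivAt W (-(Complex.I * (ℓ t : ℂ)) * W t
        + (z * (a t : ℂ) + Complex.I * ((a t * μ t : ℝ) : ℂ)) * U t) t) →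
      (∀ t, HasDerivAt u0 (Complex.I * ((a t * θ / g t : ℝ) : ℂ) * u0 t
        + z * (a t : ℂ) * w0 t) t) →
      (∀ t, HasDerivAt w0 (-(Complex.I * ((a t * θ / g t : ℝ) : ℂ)) * w0 t
        + z * (a t : ℂ) * u0 t) t) →
      (∀ᶠ t in atBot, ‖U t‖ ≤ 2) → (∀ᶠ t in atBot, ‖W t‖ ≤ 2) →
      Tendsto (fun t => U t - u0 t) atBot (nhds 0) →
      Tendsto (fun t => W t - w0 t) atBot (nhds 0) →
      ∀ t ≤ x1, ‖U t - u0 t‖ ≤ C * Real.exp (|z.re| * g t) / ‖z‖ ∧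
        ‖W t - w0 t‖ ≤ C * Real.exp (|z.re| * g t) / ‖z‖ := by
  have hA : 0 < A := (hgpos 0).trans_le (hgA 0)
  set S : ℝ := 8 * Real.exp ((1 + K ^ 2) * A) with hS
  set N : ℝ := K + K ^ 2 + K * |θ| with hN
  set V : ℝ := Real.exp A * (2 * (1 + 2 * K) ^ 2 + 4 * N ^ 2 * S * A) with hV
  have hS0 : 0 < S := by positivity
  have hN0 : 0 ≤ N := by positivity
  have hV0 : 0 < V := by positivity
  refine ⟨Real.sqrt V + K * Real.sqrt S, by positivity, ?_⟩
  intro z hz U W u0 w0 hU hW hu0 hw0 hUb hWb hUl hWl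
  have hz0 : 0 < ‖z‖ := by linarith
  have hzne : z ≠ 0 := norm_pos_iff.mp hz0
  -- step A
  have hA1 : ∀ t ≤ x1, ‖U t‖ ^ 2 + ‖W t‖ ^ 2 ≤ S * Real.exp (2 * |z.re| * g t) := by
    have h := energy_aux a g ℓ z x1 (K ^ 2) 0 8 U W
      (fun t => - Complex.I * ((a t * μ t : ℝ) : ℂ) * W t)
      (fun t => Complex.I * ((a t * μ t : ℝ) : ℂ) * U t) ha hg (fun t => (hgpos t).le)
      (by positivity) le_rfl (by norm_num)
      (fun t => (hU t).congr_deriv (by ring)) (fun t => (hW t).congr_deriv (by ring))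
      (by
        intro t ht
        have h1 := hμK t ht
        have h2 : μ t ^ 2 ≤ K ^ 2 := sq_le_sq' (abs_le.mp h1).1 (abs_le.mp h1).2
        simp only [norm_mul, norm_neg, Complex.norm_I, Complex.norm_real, Real.norm_eq_abs, mul_pow,
          sq_abs, zero_mul, add_zero, one_mul]
        have h3 : μ t ^ 2 * (‖U t‖ ^ 2 + ‖W t‖ ^ 2) ≤ K ^ 2 * (‖U t‖ ^ 2 + ‖W t‖ ^ 2) := by gcongr
        have h4 := mul_le_mul_of_nonneg_left h3 (sq_nonneg (a t))
        linarith)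
      (by
        filter_upwards [hUb, hWb] with t h1 h2
        nlinarith [norm_nonneg (U t), norm_nonneg (W t)])
    intro t ht
    refine (h t ht).trans ?_
    rw [show (2 * |z.re| + 1 + K ^ 2) * g t = 2 * |z.re| * g t + (1 + K ^ 2) * g t by ring,
      Real.exp_add, hS]
    have h1 : Real.exp ((1 + K ^ 2) * g t) ≤ Real.exp ((1 + K ^ 2) * A) := by
      apply Real.exp_le_exp.mpr
      exact mul_le_mul_of_nonneg_left (hgA t) (by positivity)
    have h2 := Real.exp_pos (2 * |z.re| * g t)
    nlinarith
  have hA2 : ∀ t ≤ x1, ‖U t‖ ≤ Real.sqrt S * Real.exp (|z.re| * g t) ∧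
      ‖W t‖ ≤ Real.sqrt S * Real.exp (|z.re| * g t) := by
    intro t ht
    have h1 := hA1 t ht
    have h2 : S * Real.exp (2 * |z.re| * g t) = (Real.sqrt S * Real.exp (|z.re| * g t)) ^ 2 := by
      rw [mul_pow, Real.sq_sqrt hS0.le, ← Real.exp_nat_mul]; congr 2; push_cast; ring
    rw [h2] at h1
    exact ⟨le_of_sq_aux (by nlinarith [sq_nonneg ‖W t‖]) (by positivity), le_of_sq_aux (by nlinarith [sq_nonneg ‖U t‖]) (by positivity)⟩
  -- step B
  set d : ℝ → ℂ := fun t => U t + z⁻¹ * (Complex.I * (μ t : ℂ) / 2 * U t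
    - Complex.I * (p t : ℂ) / 2 * W t) - u0 t with hd
  set e : ℝ → ℂ := fun t => W t + z⁻¹ * (-(Complex.I * (μ t : ℂ) / 2) * W t
    + Complex.I * (p t : ℂ) / 2 * U t) - w0 t with he
  set ρ1 : ℝ → ℂ := fun t => z⁻¹ * ((Complex.I * (μ' t : ℂ) / 2) * U t + (-(Complex.I * (p' t : ℂ) / 2)
    + (a t : ℂ) * (μ t : ℂ) ^ 2 / 2 - (a t : ℂ) * (p t : ℂ) ^ 2 / 2
      - (p t : ℂ) * ((a t * θ / g t : ℝ) : ℂ)) * W t) with hρ1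
  set ρ2 : ℝ → ℂ := fun t => z⁻¹ * (-(Complex.I * (μ' t : ℂ) / 2) * W t + ((Complex.I * (p' t : ℂ) / 2)
    + (a t : ℂ) * (μ t : ℂ) ^ 2 / 2 - (a t : ℂ) * (p t : ℂ) ^ 2 / 2
      - (p t : ℂ) * ((a t * θ / g t : ℝ) : ℂ)) * U t) with hρ2
  have hI2 : Complex.I ^ 2 = -1 := Complex.I_sq
  have hdd : ∀ t, HasDerivAt d (Complex.I * ((a t * θ / g t : ℝ) : ℂ) * d t
      + z * (a t : ℂ) * e t + ρ1 t) t := by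
    intro t
    have h1 := (((hμ t).ofReal_comp.const_mul Complex.I).div_const 2).mul (hU t)
    have h2 := (((hp t).ofReal_comp.const_mul Complex.I).div_const 2).mul (hW t)
    refine (((hU t).add ((h1.sub h2).const_mul z⁻¹)).sub (hu0 t)).congr_deriv ?_
    simp only [hd, he, hρ1, hℓ]
    push_cast
    generalize (a t : ℂ) * θ / g t = η
    field_simp
    linear_combination (a t * μ t * p t * U t - a t * (μ t) ^ 2 * W t + a t * (p t)^2 * W t - a t * μ t * p t * U t + 2 * p t * η * W t) * hI2
  have hee : ∀ t, HasDerivAt e (-(Complex.I * ((a t * θ / g t : ℝ) : ℂ)) * e t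
      + z * (a t : ℂ) * d t + ρ2 t) t := by
    intro t
    have h1 := (((hμ t).ofReal_comp.const_mul Complex.I).div_const 2).neg.mul (hW t)
    have h2 := (((hp t).ofReal_comp.const_mul Complex.I).div_const 2).mul (hU t)
    refine (((hW t).add ((h1.add h2).const_mul z⁻¹)).sub (hw0 t)).congr_deriv ?_
    simp only [hd, he, hρ2, hℓ]
    push_cast
    generalize (a t : ℂ) * θ / g t = η
    simp only [Pi.neg_apply]
    field_simp
    linear_combination (- a t * (μ t) ^ 2 * U t + a t * (p t)^2 * U t + 2 * p t * η * U t) * hI2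
  have hpη : ∀ t ≤ x1, ‖(p t : ℂ) * ((a t * θ / g t : ℝ) : ℂ)‖ ≤ a t * (K * |θ|) := by
    intro t ht
    have h1 := hpg t ht
    have h2 := hgpos t
    rw [norm_mul, Complex.norm_real, Complex.norm_real, Real.norm_eq_abs, Real.norm_eq_abs, abs_div,
      abs_mul, abs_of_pos (ha t), abs_of_pos h2]
    have h3 : |p t| * (a t * |θ| / g t) ≤ K * g t * (a t * |θ| / g t) := by
      apply mul_le_mul_of_nonneg_right h1
      have := ha t
      positivity
    refine h3.trans (le_of_eq ?_)
    field_simp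
  have hcoef : ∀ t ≤ x1, ∀ s : ℂ, ‖s‖ = |p' t| / 2 → ∀ Y Z s' : ℂ, ‖s'‖ = |μ' t| / 2 →
      ‖z⁻¹ * (s' * Y + (s + (a t : ℂ) * (μ t : ℂ) ^ 2 / 2 - (a t : ℂ) * (p t : ℂ) ^ 2 / 2
      - (p t : ℂ) * ((a t * θ / g t : ℝ) : ℂ)) * Z)‖ ≤ ‖z‖⁻¹ * (a t * N * (‖Y‖ + ‖Z‖)) := by
    intro t ht s hs Y Z s' hs'
    have hat := ha t
    rw [norm_mul, norm_inv]
    apply mul_le_mul_of_nonneg_left _ (by positivity)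
    refine (norm_add_le _ _).trans ?_
    rw [norm_mul, norm_mul, hs', mul_add]
    have hsq : ∀ y : ℝ, |y| ≤ K → ‖(a t : ℂ) * (y : ℂ) ^ 2 / 2‖ ≤ a t * K ^ 2 / 2 := by
      intro y hy
      rw [norm_div, norm_mul, norm_pow, Complex.norm_real, Complex.norm_real, Real.norm_eq_abs, Real.norm_eq_abs,
        abs_of_pos hat, Complex.norm_ofNat]
      gcongr
    have h1 : |μ' t| / 2 * ‖Y‖ ≤ a t * N * ‖Y‖ := by
      gcongr
      have := hμ'K t ht
      rw [hN]
      nlinarith [mul_nonneg hat.le hK, mul_nonneg hat.le (sq_nonneg K), mul_nonneg hat.le (mul_nonneg hK (abs_nonneg θ))]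
    have h2 : ‖s + (a t : ℂ) * (μ t : ℂ) ^ 2 / 2 - (a t : ℂ) * (p t : ℂ) ^ 2 / 2
      - (p t : ℂ) * ((a t * θ / g t : ℝ) : ℂ)‖ ≤ a t * N := by
      refine (norm_sub_le _ _).trans ?_
      refine (add_le_add_left (norm_sub_le _ _) _).trans ?_
      refine (add_le_add_left (add_le_add_left (norm_add_le _ _) _) _).trans ?_
      have e1 := hsq _ (hμK t ht)
      have e2 := hsq _ (hpK t ht)
      have e3 := hpη t ht
      have e4 := hp'K t ht
      rw [hs, hN]
      nlinarith [mul_nonneg hat.le hK]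
    have h3 := mul_le_mul_of_nonneg_right h2 (norm_nonneg Z)
    linarith
  have hn1 : ∀ y : ℝ, ‖Complex.I * (y : ℂ) / 2‖ = |y| / 2 := by
    intro y; simp
  have hdE : ∀ t ≤ x1, ‖d t‖ ^ 2 + ‖e t‖ ^ 2 ≤ (Real.sqrt V * Real.exp (|z.re| * g t) / ‖z‖) ^ 2 := by
    have h := energy_aux a g (fun t => a t * θ / g t) z x1 0 (4 * N ^ 2 * S / ‖z‖ ^ 2)
      (2 * ((1 + 2 * K) / ‖z‖) ^ 2) d e ρ1 ρ2 ha hg (fun t => (hgpos t).le) le_rfl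
      (by positivity) (by positivity) hdd hee
      (by
        intro t ht
        have hat := ha t
        have h1 : ‖ρ1 t‖ ≤ ‖z‖⁻¹ * (a t * N * (‖U t‖ + ‖W t‖)) :=
          hcoef t ht _ (by rw [norm_neg, hn1]) _ _ _ (by rw [hn1])
        have h2 : ‖ρ2 t‖ ≤ ‖z‖⁻¹ * (a t * N * (‖W t‖ + ‖U t‖)) :=
          hcoef t ht _ (by rw [hn1]) _ _ _ (by rw [norm_neg, hn1])
        have h3 : ‖ρ1 t‖ ^ 2 ≤ (‖z‖⁻¹ * (a t * N)) ^ 2 * (‖U t‖ + ‖W t‖) ^ 2 := by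
          rw [← mul_pow]; gcongr; linarith
        have h4 : ‖ρ2 t‖ ^ 2 ≤ (‖z‖⁻¹ * (a t * N)) ^ 2 * (‖U t‖ + ‖W t‖) ^ 2 := by
          rw [← mul_pow]; gcongr; linarith
        have h5 : (‖U t‖ + ‖W t‖) ^ 2 ≤ 2 * (S * Real.exp (2 * |z.re| * g t)) := by
          have := hA1 t ht
          nlinarith [sq_nonneg (‖U t‖ - ‖W t‖)]
        have h6 := mul_le_mul_of_nonneg_left h5 (sq_nonneg (‖z‖⁻¹ * (a t * N)))
        have h7 : (‖z‖⁻¹ * (a t * N)) ^ 2 * (2 * (S * Real.exp (2 * |z.re| * g t))) * 2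
          = a t ^ 2 * (4 * N ^ 2 * S / ‖z‖ ^ 2 * Real.exp (2 * |z.re| * g t)) := by
          field_simp; ring
        rw [zero_mul, zero_add]
        linarith)
      (by
        have hl1 : ∀ᶠ t in atBot, ‖U t - u0 t‖ < ‖z‖⁻¹ := by
          have := hUl.norm
          rw [norm_zero] at this
          exact this.eventually_lt_const (by positivity)
        have hl2 : ∀ᶠ t in atBot, ‖W t - w0 t‖ < ‖z‖⁻¹ := by
          have := hWl.norm
          rw [norm_zero] at this
          exact this.eventually_lt_const (by positivity)
        filter_upwards [hl1, hl2, hUb, hWb, eventually_le_atBot x1] with t h1 h2 h3 h4 ht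
        have h5 : ∀ s s' Y Z : ℂ, ‖Y‖ ≤ 2 → ‖Z‖ ≤ 2 → ‖s‖ ≤ K / 2 → ‖s'‖ ≤ K / 2 →
            ‖z⁻¹ * (s * Y + s' * Z)‖ ≤ 2 * K / ‖z‖ := by
          intro s s' Y Z hY hZ hs hs'
          rw [norm_mul, norm_inv]
          have i1 : ‖s * Y + s' * Z‖ ≤ K / 2 * 2 + K / 2 * 2 := by
            refine (norm_add_le _ _).trans ?_
            rw [norm_mul, norm_mul]; gcongr
          rw [div_eq_inv_mul]
          gcongr; linarith
        have k1 : ‖Complex.I * (μ t : ℂ) / 2‖ ≤ K / 2 := by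
          rw [hn1]; linarith [hμK t ht]
        have k2 : ‖Complex.I * (p t : ℂ) / 2‖ ≤ K / 2 := by
          rw [hn1]; linarith [hpK t ht]
        have h6 : ‖d t‖ ≤ (1 + 2 * K) / ‖z‖ := by
          have : d t = (U t - u0 t) + z⁻¹ * (Complex.I * (μ t : ℂ) / 2 * U t
            + -(Complex.I * (p t : ℂ) / 2) * W t) := by simp only [hd]; ring
          rw [this, add_div, one_div]
          exact (norm_add_le _ _).trans (add_le_add h1.le (h5 _ _ _ _ h3 h4 k1 (by rwa [norm_neg])))
        have h7 : ‖e t‖ ≤ (1 + 2 * K) / ‖z‖ := by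
          have : e t = (W t - w0 t) + z⁻¹ * (-(Complex.I * (μ t : ℂ) / 2) * W t
            + (Complex.I * (p t : ℂ) / 2) * U t) := by simp only [he]; ring
          rw [this, add_div, one_div]
          exact (norm_add_le _ _).trans (add_le_add h2.le (h5 _ _ _ _ h4 h3 (by rwa [norm_neg]) k2))
        have h8 : ‖d t‖ ^ 2 ≤ ((1 + 2 * K) / ‖z‖) ^ 2 := by gcongr
        have h9 : ‖e t‖ ^ 2 ≤ ((1 + 2 * K) / ‖z‖) ^ 2 := by gcongr
        linarith)
    intro t ht
    refine (h t ht).trans ?_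
    have h1 : Real.exp ((2 * |z.re| + 1 + 0) * g t) ≤ Real.exp (|z.re| * g t) ^ 2 * Real.exp A := by
      rw [← Real.exp_nat_mul, ← Real.exp_add]
      apply Real.exp_le_exp.mpr
      push_cast
      have := hgA t
      linarith
    have h2 : 2 * ((1 + 2 * K) / ‖z‖) ^ 2 + 4 * N ^ 2 * S / ‖z‖ ^ 2 * g t
        ≤ 2 * ((1 + 2 * K) / ‖z‖) ^ 2 + 4 * N ^ 2 * S / ‖z‖ ^ 2 * A := by
      have := hgA t
      gcongr
    have hgt := hgpos t
    refine (mul_le_mul h1 h2 (by positivity) (by positivity)).trans (le_of_eq ?_)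
    rw [div_pow (_ * _), mul_pow, Real.sq_sqrt hV0.le, hV]
    field_simp
  intro t ht
  have hE := hdE t ht
  have hd1 : ‖d t‖ ≤ Real.sqrt V * Real.exp (|z.re| * g t) / ‖z‖ := by
    refine le_of_sq_aux ?_ (by positivity)
    nlinarith [sq_nonneg ‖e t‖]
  have he1 : ‖e t‖ ≤ Real.sqrt V * Real.exp (|z.re| * g t) / ‖z‖ := by
    refine le_of_sq_aux ?_ (by positivity)
    nlinarith [sq_nonneg ‖d t‖]
  obtain ⟨hU2, hW2⟩ := hA2 t ht
  have k1 : ‖Complex.I * (μ t : ℂ) / 2‖ ≤ K / 2 := by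
    rw [hn1]; linarith [hμK t ht]
  have k2 : ‖Complex.I * (p t : ℂ) / 2‖ ≤ K / 2 := by
    rw [hn1]; linarith [hpK t ht]
  have h5 : ∀ s s' Y Z : ℂ, ‖Y‖ ≤ Real.sqrt S * Real.exp (|z.re| * g t) →
      ‖Z‖ ≤ Real.sqrt S * Real.exp (|z.re| * g t) → ‖s‖ ≤ K / 2 → ‖s'‖ ≤ K / 2 →
      ‖z⁻¹ * (s * Y + s' * Z)‖ ≤ K * Real.sqrt S * Real.exp (|z.re| * g t) / ‖z‖ := by
    intro s s' Y Z hY hZ hs hs'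
    rw [norm_mul, norm_inv]
    have i1 : ‖s * Y + s' * Z‖ ≤ K / 2 * (Real.sqrt S * Real.exp (|z.re| * g t))
        + K / 2 * (Real.sqrt S * Real.exp (|z.re| * g t)) := by
      refine (norm_add_le _ _).trans ?_
      rw [norm_mul, norm_mul]; gcongr
    rw [div_eq_inv_mul]
    gcongr; linarith
  constructor
  · have : U t - u0 t = d t - z⁻¹ * (Complex.I * (μ t : ℂ) / 2 * U t
        + -(Complex.I * (p t : ℂ) / 2) * W t) := by simp only [hd]; ring
    rw [this, add_mul, add_div]
    exact (norm_sub_le _ _).trans (add_le_add hd1 (h5 _ _ _ _ hU2 hW2 k1 (by rwa [norm_neg])))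
  · have : W t - w0 t = e t - z⁻¹ * (-(Complex.I * (μ t : ℂ) / 2) * W t
        + (Complex.I * (p t : ℂ) / 2) * U t) := by simp only [he]; ring
    rw [this, add_mul, add_div]
    exact (norm_sub_le _ _).trans (add_le_add he1 (h5 _ _ _ _ hW2 hU2 (by rwa [norm_neg]) k2))

/-- coefficient of the entire function behind `Bfun`. -/
noncomputable def bcoef (ν : ℂ) (k : ℕ) : ℂ :=
  Complex.Gamma (1 - ν) / (Complex.Gamma ((k : ℂ) + 1 - ν) * (Nat.factorial k : ℂ))

lemma re_aux (ν : ℂ) (hν : ν.re = 1 / 2) (k : ℕ) : 1 / 2 ≤ ((k : ℂ) + 1 - ν).re := by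
  simp [hν]
  have : (0 : ℝ) ≤ k := Nat.cast_nonneg k
  linarith

lemma gamma_ne_aux (ν : ℂ) (hν : ν.re = 1 / 2) (k : ℕ) : Complex.Gamma ((k : ℂ) + 1 - ν) ≠ 0 := by
  apply Complex.Gamma_ne_zero_of_re_pos
  have := re_aux ν hν k
  linarith

lemma ne_aux (ν : ℂ) (hν : ν.re = 1 / 2) (k : ℕ) : (k : ℂ) + 1 - ν ≠ 0 := by
  intro h
  have := re_aux ν hν k
  rw [h] at this
  norm_num at this

lemma gamma_succ_aux (ν : ℂ) (hν : ν.re = 1 / 2) (k : ℕ) :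
    Complex.Gamma ((k : ℂ) + 2 - ν) = ((k : ℂ) + 1 - ν) * Complex.Gamma ((k : ℂ) + 1 - ν) := by
  rw [← Complex.Gamma_add_one _ (ne_aux ν hν k)]
  congr 1; ring

lemma bcoef_succ (ν : ℂ) (hν : ν.re = 1 / 2) (k : ℕ) :
    bcoef ν (k + 1) * (((k : ℂ) + 1 - ν) * ((k : ℂ) + 1)) = bcoef ν k := by
  unfold bcoef
  have h1 := gamma_ne_aux ν hν k
  have h2 := ne_aux ν hν k
  have h3 : (Nat.factorial k : ℂ) ≠ 0 := by exact_mod_cast Nat.factorial_ne_zero k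
  have h4 : ((k : ℂ) + 1) ≠ 0 := by exact_mod_cast Nat.succ_ne_zero k
  have h5 : Complex.Gamma (((k + 1 : ℕ) : ℂ) + 1 - ν) = ((k : ℂ) + 1 - ν) * Complex.Gamma ((k : ℂ) + 1 - ν) := by
    rw [← gamma_succ_aux ν hν k]; congr 1; push_cast; ring
  rw [h5, Nat.factorial_succ]
  push_cast
  field_simp

lemma bcoef_zero (ν : ℂ) (hν : ν.re = 1 / 2) : bcoef ν 0 = 1 := by
  have h1 := gamma_ne_aux ν hν 0
  unfold bcoef
  simp only [Nat.cast_zero, zero_add] at h1 ⊢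
  simp [h1]

lemma bcoef_bound (ν : ℂ) (hν : ν.re = 1 / 2) (k : ℕ) : ‖bcoef ν k‖ ≤ 2 ^ k / (Nat.factorial k : ℝ) := by
  induction k with
  | zero => simp [bcoef_zero ν hν]
  | succ k ih =>
    have h := congrArg norm (bcoef_succ ν hν k)
    rw [norm_mul, norm_mul] at h
    have h1 : 1 / 2 ≤ ‖(k : ℂ) + 1 - ν‖ := (re_aux ν hν k).trans (Complex.re_le_norm _)
    have h2 : ‖(k : ℂ) + 1‖ = k + 1 := by
      have : ((k : ℂ) + 1) = ((k + 1 : ℝ) : ℂ) := by push_cast; ring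
      rw [this, Complex.norm_real, Real.norm_of_nonneg (by positivity)]
    rw [h2] at h
    rw [Nat.factorial_succ, le_div_iff₀ (by positivity)]
    rw [le_div_iff₀ (by positivity)] at ih
    push_cast
    have hk : (0 : ℝ) < (k.factorial : ℝ) := by positivity
    have h3 : ‖bcoef ν (k + 1)‖ * ((1 / 2) * (k + 1)) ≤ ‖bcoef ν k‖ := by
      rw [← h]; gcongr
    have h4 := mul_le_mul_of_nonneg_right h3 hk.le
    rw [pow_succ]
    nlinarith

/-- the entire function `Σ b_k y^k`. -/
noncomputable def fser (ν y : ℂ) : ℂ := ∑' k : ℕ, bcoef ν k * y ^ k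

/-- its derivative. -/
noncomputable def fser' (ν y : ℂ) : ℂ := ∑' k : ℕ, bcoef ν (k + 1) * ((k : ℂ) + 1) * y ^ k

lemma summable_fser (ν : ℂ) (hν : ν.re = 1 / 2) (y : ℂ) : Summable fun k : ℕ => bcoef ν k * y ^ k := by
  apply Summable.of_norm_bounded (g := fun k : ℕ => (2 * ‖y‖) ^ k / (Nat.factorial k : ℝ))
  · exact Real.summable_pow_div_factorial _
  · intro k
    rw [norm_mul, norm_pow, mul_pow, mul_div_right_comm]
    gcongr
    exact bcoef_bound ν hν k

lemma bcoef'_bound (ν : ℂ) (hν : ν.re = 1 / 2) (k : ℕ) :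
    ‖bcoef ν (k + 1) * ((k : ℂ) + 1)‖ ≤ 2 * (2 ^ k / (Nat.factorial k : ℝ)) := by
  have h2 : ‖(k : ℂ) + 1‖ = k + 1 := by
    have : ((k : ℂ) + 1) = ((k + 1 : ℝ) : ℂ) := by push_cast; ring
    rw [this, Complex.norm_real, Real.norm_of_nonneg (by positivity)]
  rw [norm_mul, h2]
  have h := bcoef_bound ν hν (k + 1)
  have h1 := mul_le_mul_of_nonneg_right h (show (0:ℝ) ≤ k + 1 by positivity)
  refine h1.trans (le_of_eq ?_)
  rw [Nat.factorial_succ]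
  push_cast
  field_simp
  ring

lemma summable_fser' (ν : ℂ) (hν : ν.re = 1 / 2) (y : ℂ) :
    Summable fun k : ℕ => bcoef ν (k + 1) * ((k : ℂ) + 1) * y ^ k := by
  apply Summable.of_norm_bounded (g := fun k : ℕ => 2 * ((2 * ‖y‖) ^ k / (Nat.factorial k : ℝ)))
  · exact (Real.summable_pow_div_factorial _).mul_left 2
  · intro k
    rw [norm_mul, norm_pow, mul_pow, mul_div_right_comm, ← mul_assoc]
    gcongr
    exact bcoef'_bound ν hν k

lemma pow_deriv_tsum (c : ℕ → ℂ) (S : ℝ)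
    (hc : ∀ k, ‖c (k + 1) * ((k : ℂ) + 1)‖ ≤ S * (2 ^ k / (Nat.factorial k : ℝ)))
    (hs : ∀ y : ℂ, Summable fun k : ℕ => c k * y ^ k) (y : ℂ) :
    HasDerivAt (fun y : ℂ => ∑' k : ℕ, c k * y ^ k)
      (∑' k : ℕ, c (k + 1) * ((k : ℂ) + 1) * y ^ k) y := by
  have hsum : Summable fun k : ℕ => S * ((2 * (‖y‖ + 1)) ^ k / (Nat.factorial k : ℝ)) :=
    (Real.summable_pow_div_factorial _).mul_left S
  have h := hasDerivAt_tsum_of_isPreconnected (𝕜 := ℂ) (F := ℂ)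
    (g := fun k y => c (k + 1) * y ^ (k + 1)) (g' := fun k y => c (k + 1) * ((k : ℂ) + 1) * y ^ k)
    (t := Metric.ball (0 : ℂ) (‖y‖ + 1)) (y₀ := 0) (y := y) hsum Metric.isOpen_ball
    (convex_ball _ _).isPreconnected
    (by
      intro k w _
      refine ((hasDerivAt_pow (k + 1) w).const_mul (c (k + 1))).congr_deriv ?_
      rw [Nat.add_sub_cancel]; push_cast; ring)
    (by
      intro k w hw
      rw [mem_ball_zero_iff] at hw
      rw [norm_mul, norm_pow, mul_pow, mul_div_right_comm, ← mul_assoc]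
      have hS : 0 ≤ S * (2 ^ k / (Nat.factorial k : ℝ)) := (norm_nonneg _).trans (hc k)
      exact mul_le_mul (hc k) (by gcongr) (by positivity) hS)
    (by simp; positivity) (by simp) (by rw [mem_ball_zero_iff]; linarith)
  have h2 : (fun y : ℂ => ∑' k : ℕ, c k * y ^ k) = fun y => c 0 + ∑' k : ℕ, c (k + 1) * y ^ (k + 1) := by
    funext w
    rw [(hs w).tsum_eq_zero_add]; simp
  rw [h2]
  exact h.const_add (c 0)

lemma fser_deriv (ν : ℂ) (hν : ν.re = 1 / 2) (y : ℂ) : HasDerivAt (fser ν) (fser' ν y) y :=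
  pow_deriv_tsum (bcoef ν) 2 (bcoef'_bound ν hν) (summable_fser ν hν) y

lemma fser'_deriv (ν : ℂ) (hν : ν.re = 1 / 2) (y : ℂ) :
    HasDerivAt (fser' ν) (∑' k : ℕ, bcoef ν (k + 2) * ((k : ℂ) + 2) * ((k : ℂ) + 1) * y ^ k) y := by
  have h := pow_deriv_tsum (fun k => bcoef ν (k + 1) * ((k : ℂ) + 1)) 4
    (by
      intro k
      have h1 := bcoef'_bound ν hν (k + 1)
      have h2 : ‖(k : ℂ) + 1‖ = k + 1 := by
        have : ((k : ℂ) + 1) = ((k + 1 : ℝ) : ℂ) := by push_cast; ring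
        rw [this, Complex.norm_real, Real.norm_of_nonneg (by positivity)]
      rw [norm_mul, h2]
      have h3 := mul_le_mul_of_nonneg_right h1 (show (0:ℝ) ≤ k + 1 by positivity)
      refine h3.trans (le_of_eq ?_)
      rw [Nat.factorial_succ]
      push_cast
      field_simp
      ring)
    (summable_fser' ν hν) y
  refine h.congr_deriv ?_
  apply tsum_congr
  intro k
  push_cast
  ring

lemma fser_ode (ν : ℂ) (hν : ν.re = 1 / 2) (y : ℂ) :
    y * (∑' k : ℕ, bcoef ν (k + 2) * ((k : ℂ) + 2) * ((k : ℂ) + 1) * y ^ k) + (1 - ν) * fser' ν y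
      = fser ν y := by
  have h0 : y * (∑' k : ℕ, bcoef ν (k + 2) * ((k : ℂ) + 2) * ((k : ℂ) + 1) * y ^ k)
      = ∑' k : ℕ, bcoef ν (k + 1) * ((k : ℂ) + 1) * (k : ℂ) * y ^ k := by
    have hs : Summable fun k : ℕ => bcoef ν (k + 1) * ((k : ℂ) + 1) * (k : ℂ) * y ^ k := by
      have : (fun k : ℕ => bcoef ν (k + 1) * ((k : ℂ) + 1) * (k : ℂ) * y ^ k)
        = fun k => bcoef ν k * y ^ k - (1 - ν) * (bcoef ν (k + 1) * ((k : ℂ) + 1) * y ^ k) := by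
        funext k
        rw [← bcoef_succ ν hν k]; ring
      rw [this]
      exact (summable_fser ν hν y).sub ((summable_fser' ν hν y).mul_left _)
    rw [hs.tsum_eq_zero_add, ← tsum_mul_left]
    simp only [Nat.cast_zero, mul_zero, zero_mul, zero_add]
    apply tsum_congr
    intro k
    push_cast
    ring
  rw [h0, fser', ← tsum_mul_left, fser]
  have hs : Summable fun k : ℕ => bcoef ν (k + 1) * ((k : ℂ) + 1) * (k : ℂ) * y ^ k := by
    have : (fun k : ℕ => bcoef ν (k + 1) * ((k : ℂ) + 1) * (k : ℂ) * y ^ k)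
      = fun k => bcoef ν k * y ^ k - (1 - ν) * (bcoef ν (k + 1) * ((k : ℂ) + 1) * y ^ k) := by
      funext k
      rw [← bcoef_succ ν hν k]; ring
    rw [this]
    exact (summable_fser ν hν y).sub ((summable_fser' ν hν y).mul_left _)
  rw [← hs.tsum_add ((summable_fser' ν hν y).mul_left _)]
  apply tsum_congr
  intro k
  rw [← bcoef_succ ν hν k]; ring

lemma exp_log_aux (s : ℂ) (X : ℝ) (hX : 0 < X) (n : ℕ) :
    Complex.exp ((s + (n : ℂ)) * ((Real.log X : ℝ) : ℂ))
      = Complex.exp (s * ((Real.log X : ℝ) : ℂ)) * (X : ℂ) ^ n := by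
  rw [add_mul, Complex.exp_add, Complex.exp_nat_mul, ← Complex.ofReal_exp, Real.exp_log hX]

lemma Bfun_eq (ν z : ℂ) (X : ℝ) (hX : 0 < X) :
    Bfun ν z X = Complex.exp ((1 / 2 - ν) * ((Real.log X : ℝ) : ℂ)) * fser ν ((X * z / 2) ^ 2) := by
  unfold Bfun fser
  rw [← tsum_mul_left, ← tsum_mul_left]
  apply tsum_congr
  intro k
  have h := exp_log_aux (1 / 2 - ν) X hX (2 * k)
  push_cast at h
  rw [h, bcoef]
  rw [← pow_mul]
  ring

lemma Dfun_eq (ν z : ℂ) (hν : ν.re = 1 / 2) (X : ℝ) (hX : 0 < X) :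
    Dfun ν z X = Complex.exp ((1 / 2 - ν) * ((Real.log X : ℝ) : ℂ)) * (X * z / 2 * fser' ν ((X * z / 2) ^ 2)) := by
  unfold Dfun fser'
  rw [← tsum_mul_left, ← tsum_mul_left, ← tsum_mul_left]
  apply tsum_congr
  intro k
  have h := exp_log_aux (1 / 2 - ν) X hX (2 * k + 1)
  push_cast at h
  rw [show (3 : ℂ) / 2 - ν + 2 * (k : ℂ) = 1 / 2 - ν + (2 * k + 1) by ring, h, bcoef]
  have h5 : ((k + 1 : ℕ) : ℂ) + 1 - ν = (k : ℂ) + 2 - ν := by push_cast; ring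
  have h3 : (Nat.factorial k : ℂ) ≠ 0 := by exact_mod_cast Nat.factorial_ne_zero k
  have h4 : ((k : ℂ) + 1) ≠ 0 := by exact_mod_cast Nat.succ_ne_zero k
  have h6 : Complex.Gamma ((k : ℂ) + 2 - ν) ≠ 0 := by
    rw [gamma_succ_aux ν hν k]; exact mul_ne_zero (ne_aux ν hν k) (gamma_ne_aux ν hν k)
  rw [h5, Nat.factorial_succ]
  push_cast
  rw [← pow_mul]
  field_simp
  ring

lemma Bfun_deriv (ν z : ℂ) (hν : ν.re = 1 / 2) (X : ℝ) (hX : 0 < X) :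
    HasDerivAt (Bfun ν z) ((1 / 2 - ν) / X * Bfun ν z X + z * Dfun ν z X) X := by
  have hXc : (X : ℂ) ≠ 0 := by exact_mod_cast hX.ne'
  have hlog : HasDerivAt (fun X : ℝ => Complex.exp ((1 / 2 - ν) * ((Real.log X : ℝ) : ℂ)))
      (Complex.exp ((1 / 2 - ν) * ((Real.log X : ℝ) : ℂ)) * ((1 / 2 - ν) * ((X⁻¹ : ℝ) : ℂ))) X :=
    ((Real.hasDerivAt_log hX.ne').ofReal_comp.const_mul (1 / 2 - ν)).cexp
  have hy : HasDerivAt (fun X : ℝ => ((X : ℂ) * z / 2) ^ 2) (2 * ((X : ℂ) * z / 2) * (z / 2)) X := by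
    have h1 : HasDerivAt (fun X : ℝ => (X : ℂ) * z / 2) (z / 2) X := by
      simpa using ((hasDerivAt_id X).ofReal_comp.mul_const z).div_const 2
    refine (h1.pow 2).congr_deriv ?_
    simp
  have hf := (fser_deriv ν hν (((X : ℂ) * z / 2) ^ 2)).comp X hy
  have h := hlog.mul hf
  refine (h.congr_deriv ?_).congr_of_eventuallyEq ?_
  · rw [Bfun_eq ν z X hX, Dfun_eq ν z hν X hX]
    push_cast
    simp only [Function.comp]
    field_simp
  · filter_upwards [lt_mem_nhds hX] with w hw
    exact Bfun_eq ν z w hw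

lemma Dfun_deriv (ν z : ℂ) (hν : ν.re = 1 / 2) (X : ℝ) (hX : 0 < X) :
    HasDerivAt (Dfun ν z) (-((1 / 2 - ν) / X) * Dfun ν z X + z * Bfun ν z X) X := by
  have hXc : (X : ℂ) ≠ 0 := by exact_mod_cast hX.ne'
  have hlog : HasDerivAt (fun X : ℝ => Complex.exp ((1 / 2 - ν) * ((Real.log X : ℝ) : ℂ)))
      (Complex.exp ((1 / 2 - ν) * ((Real.log X : ℝ) : ℂ)) * ((1 / 2 - ν) * ((X⁻¹ : ℝ) : ℂ))) X :=
    ((Real.hasDerivAt_log hX.ne').ofReal_comp.const_mul (1 / 2 - ν)).cexp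
  have h1 : HasDerivAt (fun X : ℝ => (X : ℂ) * z / 2) (z / 2) X := by
    simpa using ((hasDerivAt_id X).ofReal_comp.mul_const z).div_const 2
  have hy : HasDerivAt (fun X : ℝ => ((X : ℂ) * z / 2) ^ 2) (2 * ((X : ℂ) * z / 2) * (z / 2)) X := by
    refine (h1.pow 2).congr_deriv ?_
    simp
  have hf := (fser'_deriv ν hν (((X : ℂ) * z / 2) ^ 2)).comp X hy
  have h := hlog.mul (h1.mul hf)
  refine (h.congr_deriv ?_).congr_of_eventuallyEq ?_
  · rw [Bfun_eq ν z X hX, Dfun_eq ν z hν X hX, ← fser_ode ν hν]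
    push_cast
    simp only [Function.comp, Pi.mul_apply]
    field_simp
    ring
  · filter_upwards [lt_mem_nhds hX] with w hw
    exact Dfun_eq ν z hν w hw

lemma Bfun_lim (ν z : ℂ) (hν : ν.re = 1 / 2) :
    Tendsto (fun X : ℝ => Bfun ν z X - Complex.exp ((1 / 2 - ν) * ((Real.log X : ℝ) : ℂ)))
      (nhdsWithin 0 (Set.Ioi 0)) (nhds 0) := by
  have h1 : Tendsto (fun X : ℝ => fser ν (((X : ℂ) * z / 2) ^ 2) - 1) (nhdsWithin 0 (Set.Ioi 0)) (nhds 0) := by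
    have hc : Continuous fun X : ℝ => fser ν (((X : ℂ) * z / 2) ^ 2) - 1 := by
      have : Continuous (fser ν) := continuous_iff_continuousAt.mpr fun y => (fser_deriv ν hν y).continuousAt
      fun_prop
    have h2 := (hc.tendsto 0).mono_left (nhdsWithin_le_nhds (s := Set.Ioi 0))
    have h3 : fser ν 0 = 1 := by
      unfold fser
      rw [tsum_eq_single 0]
      · simp [bcoef_zero ν hν]
      · intro k hk; simp [hk]
    simpa [h3] using h2
  rw [tendsto_zero_iff_norm_tendsto_zero] at h1 ⊢
  refine h1.congr' ?_
  filter_upwards [self_mem_nhdsWithin] with X hX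
  rw [Bfun_eq ν z X hX, ← mul_sub_one, norm_mul, Complex.norm_exp]
  simp [hν]

lemma Dfun_lim (ν z : ℂ) (hν : ν.re = 1 / 2) :
    Tendsto (fun X : ℝ => Dfun ν z X) (nhdsWithin 0 (Set.Ioi 0)) (nhds 0) := by
  have h1 : Tendsto (fun X : ℝ => (X : ℂ) * z / 2 * fser' ν (((X : ℂ) * z / 2) ^ 2)) (nhdsWithin 0 (Set.Ioi 0)) (nhds 0) := by
    have hc : Continuous fun X : ℝ => (X : ℂ) * z / 2 * fser' ν (((X : ℂ) * z / 2) ^ 2) := by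
      have : Continuous (fser' ν) := continuous_iff_continuousAt.mpr fun y => (fser'_deriv ν hν y).continuousAt
      fun_prop
    have h2 := (hc.tendsto 0).mono_left (nhdsWithin_le_nhds (s := Set.Ioi 0))
    simpa using h2
  rw [tendsto_zero_iff_norm_tendsto_zero] at h1 ⊢
  refine h1.congr' ?_
  filter_upwards [self_mem_nhdsWithin] with X hX
  rw [Dfun_eq ν z hν X hX, norm_mul (Complex.exp _), Complex.norm_exp]
  simp [hν]

lemma factor_aux (M Q L a b c d : ℝ) (hab : a ≠ b) (hac : a ≠ c) (had : a ≠ d) (hbc : b ≠ c) (hbd : b ≠ d)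
    (hcd : c ≠ d)
    (ha : -L * a ^ 4 + a ^ 2 - 2 * M * a + Q ^ 2 = 0) (hb : -L * b ^ 4 + b ^ 2 - 2 * M * b + Q ^ 2 = 0)
    (hc : -L * c ^ 4 + c ^ 2 - 2 * M * c + Q ^ 2 = 0) (hd : -L * d ^ 4 + d ^ 2 - 2 * M * d + Q ^ 2 = 0) (r : ℝ) :
    -L * r ^ 4 + r ^ 2 - 2 * M * r + Q ^ 2 = -L * ((r - a) * (r - b) * (r - c) * (r - d)) := by
  have e1 : ∀ y : ℝ, a ≠ y → -L * y ^ 4 + y ^ 2 - 2 * M * y + Q ^ 2 = 0 →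
      -L * (a ^ 3 + a ^ 2 * y + a * y ^ 2 + y ^ 3) + (a + y) - 2 * M = 0 := by
    intro y hy h
    have h1 : (a - y) ≠ 0 := sub_ne_zero.mpr hy
    apply mul_left_cancel₀ h1
    linear_combination ha - h
  have e2 : ∀ y : ℝ, a ≠ y → b ≠ y → -L * y ^ 4 + y ^ 2 - 2 * M * y + Q ^ 2 = 0 →
      -L * (a ^ 2 + a * b + a * y + b ^ 2 + b * y + y ^ 2) + 1 = 0 := by
    intro y hy hby h
    have h1 : (b - y) ≠ 0 := sub_ne_zero.mpr hby
    apply mul_left_cancel₀ h1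
    linear_combination e1 b hab hb - e1 y hy h
  have e3 : -L * (a + b + c + d) = 0 := by
    have h1 : (c - d) ≠ 0 := sub_ne_zero.mpr hcd
    apply mul_left_cancel₀ h1
    linear_combination e2 c hac hbc hc - e2 d had hbd hd
  linear_combination ha + (r - a) * e1 b hab hb + (r - a) * (r - b) * e2 c hac hbc hc
    + (r - a) * (r - b) * (r - c) * e3

lemma deriv_root_aux (F H : ℝ → ℝ) (a : ℝ) (hH : DifferentiableAt ℝ H a)
    (h : F =ᶠ[nhds a] fun r => (r - a) * H r) : HasDerivAt F (H a) a := by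
  have h1 := ((hasDerivAt_id a).sub_const a).mul hH.hasDerivAt
  refine (h1.congr_deriv ?_).congr_of_eventuallyEq h
  simp

lemma lagrange_aux (L a b c d r : ℝ) (hL : L ≠ 0) (hab : a < b) (hbc : b < c) (hcr : c < r) (hrd : r < d) :
    1 / (-L * ((a - b) * (a - c) * (a - d)) / a ^ 2) * (1 / (r - a))
    + 1 / (-L * ((b - a) * (b - c) * (b - d)) / b ^ 2) * (1 / (r - b))
    + 1 / (-L * ((c - a) * (c - b) * (c - d)) / c ^ 2) * (1 / (r - c))
    + 1 / (-L * ((d - a) * (d - b) * (d - c)) / d ^ 2) * (-1 / (d - r))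
    = r ^ 2 / (-L * ((r - a) * (r - b) * (r - c) * (r - d))) := by
  rw [show a - b = -(b - a) by ring, show a - c = -(c - a) by ring, show a - d = -(d - a) by ring,
    show b - c = -(c - b) by ring, show b - d = -(d - b) by ring, show c - d = -(d - c) by ring,
    show r - d = -(d - r) by ring]
  have h1 : b - a ≠ 0 := by intro h; linarith
  have h2 : c - a ≠ 0 := by intro h; linarith
  have h3 : d - a ≠ 0 := by intro h; linarith
  have h4 : c - b ≠ 0 := by intro h; linarith
  have h5 : d - b ≠ 0 := by intro h; linarith
  have h6 : d - c ≠ 0 := by intro h; linarith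
  have h7 : r - a ≠ 0 := by intro h; linarith
  have h8 : r - b ≠ 0 := by intro h; linarith
  have h9 : r - c ≠ 0 := by intro h; linarith
  have h10 : d - r ≠ 0 := by intro h; linarith
  field_simp
  ring

/-- Derivative of the Regge-Wheeler function. -/
lemma x_deriv_aux (M Q Λ : ℝ) (hΛ : 0 < Λ)
    (rn rc rm rp : ℝ) (hrn : rn < 0) (hrc : 0 < rc) (hrcm : rc < rm) (hrmp : rm < rp)
    (F : ℝ → ℝ)
    (hF : ∀ r, F r = 1 - 2 * M / r + Q ^ 2 / r ^ 2 - Λ * r ^ 2 / 3)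
    (hFn : F rn = 0) (hFc : F rc = 0) (hFm : F rm = 0) (hFp : F rp = 0)
    (κn κc κm κp : ℝ)
    (hκn : κn = deriv F rn / 2) (hκc : κc = deriv F rc / 2)
    (hκm : κm = deriv F rm / 2) (hκp : κp = deriv F rp / 2)
    (x : ℝ → ℝ)
    (hx : ∀ r, x r = 1 / (2 * κn) * Real.log (r - rn) + 1 / (2 * κc) * Real.log (r - rc)
      + 1 / (2 * κm) * Real.log (r - rm) + 1 / (2 * κp) * Real.log (rp - r)) :
    (∀ r, r ≠ 0 → F r = -(Λ / 3) * ((r - rn) * (r - rc) * (r - rm) * (r - rp)) / r ^ 2) ∧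
    (∀ r ∈ Set.Ioo rm rp, HasDerivAt x (1 / F r) r) := by
  have hP : ∀ r, r ≠ 0 → F r * r ^ 2 = -(Λ / 3) * r ^ 4 + r ^ 2 - 2 * M * r + Q ^ 2 := by
    intro r hr
    rw [hF]; field_simp; ring
  have hn0 : rn ≠ 0 := by linarith
  have hc0 : rc ≠ 0 := by linarith
  have hm0 : rm ≠ 0 := by linarith
  have hp0 : rp ≠ 0 := by linarith
  have hfac : ∀ r, r ≠ 0 → F r = -(Λ / 3) * ((r - rn) * (r - rc) * (r - rm) * (r - rp)) / r ^ 2 := by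
    intro r hr
    rw [eq_div_iff (by positivity), hP r hr]
    apply factor_aux M Q (Λ / 3) rn rc rm rp <;> first | (intro h; linarith) | skip
    · rw [← hP rn hn0, hFn, zero_mul]
    · rw [← hP rc hc0, hFc, zero_mul]
    · rw [← hP rm hm0, hFm, zero_mul]
    · rw [← hP rp hp0, hFp, zero_mul]
  refine ⟨hfac, ?_⟩
  have hev : ∀ y : ℝ, y ≠ 0 → ∀ᶠ r in nhds y, r ≠ 0 := fun y hy => isOpen_ne.mem_nhds hy
  have kn : 2 * κn = -(Λ / 3) * ((rn - rc) * (rn - rm) * (rn - rp)) / rn ^ 2 := by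
    have h := deriv_root_aux F (fun r => -(Λ / 3) * ((r - rc) * (r - rm) * (r - rp)) / r ^ 2) rn
      (by fun_prop (disch := positivity))
      (by filter_upwards [hev rn hn0] with r hr; rw [hfac r hr]; ring)
    rw [hκn, h.deriv]; ring
  have kc : 2 * κc = -(Λ / 3) * ((rc - rn) * (rc - rm) * (rc - rp)) / rc ^ 2 := by
    have h := deriv_root_aux F (fun r => -(Λ / 3) * ((r - rn) * (r - rm) * (r - rp)) / r ^ 2) rc
      (by fun_prop (disch := positivity))
      (by filter_upwards [hev rc hc0] with r hr; rw [hfac r hr]; ring)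
    rw [hκc, h.deriv]; ring
  have km : 2 * κm = -(Λ / 3) * ((rm - rn) * (rm - rc) * (rm - rp)) / rm ^ 2 := by
    have h := deriv_root_aux F (fun r => -(Λ / 3) * ((r - rn) * (r - rc) * (r - rp)) / r ^ 2) rm
      (by fun_prop (disch := positivity))
      (by filter_upwards [hev rm hm0] with r hr; rw [hfac r hr]; ring)
    rw [hκm, h.deriv]; ring
  have kp : 2 * κp = -(Λ / 3) * ((rp - rn) * (rp - rc) * (rp - rm)) / rp ^ 2 := by
    have h := deriv_root_aux F (fun r => -(Λ / 3) * ((r - rn) * (r - rc) * (r - rm)) / r ^ 2) rp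
      (by fun_prop (disch := positivity))
      (by filter_upwards [hev rp hp0] with r hr; rw [hfac r hr]; ring)
    rw [hκp, h.deriv]; ring
  intro r hr
  obtain ⟨hr1, hr2⟩ := hr
  have hxe : x = fun r => 1 / (2 * κn) * Real.log (r - rn) + 1 / (2 * κc) * Real.log (r - rc)
      + 1 / (2 * κm) * Real.log (r - rm) + 1 / (2 * κp) * Real.log (rp - r) := funext hx
  rw [hxe]
  have d1 : ∀ y, y < r → HasDerivAt (fun r => Real.log (r - y)) (1 / (r - y)) r := by
    intro y hy
    exact ((hasDerivAt_id r).sub_const y).log (sub_ne_zero.mpr hy.ne')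
  have d2 : HasDerivAt (fun r => Real.log (rp - r)) (-1 / (rp - r)) r :=
    ((hasDerivAt_id r).const_sub rp).log (sub_ne_zero.mpr hr2.ne')
  have h := ((((d1 rn (by linarith)).const_mul (1 / (2 * κn))).add
    ((d1 rc (by linarith)).const_mul (1 / (2 * κc)))).add
    ((d1 rm (by linarith)).const_mul (1 / (2 * κm)))).add (d2.const_mul (1 / (2 * κp)))
  refine h.congr_deriv ?_
  rw [kn, kc, km, kp, lagrange_aux (Λ / 3) rn rc rm rp r (by positivity) (by linarith) hrcm hr1 hr2,
    hfac r (by linarith), one_div_div]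

lemma r_aux (F x rfun : ℝ → ℝ) (rm rp : ℝ) (hFpos : ∀ r ∈ Set.Ioo rm rp, 0 < F r)
    (hx : ∀ r ∈ Set.Ioo rm rp, HasDerivAt x (1 / F r) r)
    (hrmem : ∀ s, rfun s ∈ Set.Ioo rm rp) (hrinv : ∀ s, x (rfun s) = s) :
    StrictMono rfun ∧ (∀ t, HasDerivAt rfun (F (rfun t)) t) ∧ Tendsto rfun atBot (nhds rm) := by
  have hxm : StrictMonoOn x (Set.Ioo rm rp) := by
    apply strictMonoOn_of_deriv_pos (convex_Ioo rm rp)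
    · exact fun t ht => (hx t ht).continuousAt.continuousWithinAt
    · intro t ht
      rw [interior_Ioo] at ht
      rw [(hx t ht).deriv]
      exact one_div_pos.mpr (hFpos t ht)
  have hinv2 : ∀ r ∈ Set.Ioo rm rp, rfun (x r) = r := fun r hr =>
    hxm.injOn (hrmem _) hr (hrinv _)
  have hmono : StrictMono rfun := by
    intro s t hst
    rw [← hxm.lt_iff_lt (hrmem s) (hrmem t), hrinv, hrinv]
    exact hst
  have hcont : ∀ t, ContinuousAt rfun t := by
    intro t
    rw [Metric.continuousAt_iff']
    intro ε hε
    obtain ⟨h1, h2⟩ := hrmem t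
    obtain ⟨u, hu1, hu2⟩ := exists_between (max_lt h1 (show rfun t - ε < rfun t by linarith))
    obtain ⟨v, hv1, hv2⟩ := exists_between (lt_min h2 (show rfun t < rfun t + ε by linarith))
    have hu : u ∈ Set.Ioo rm rp := ⟨(le_max_left _ _).trans_lt hu1, hu2.trans h2⟩
    have hv : v ∈ Set.Ioo rm rp := ⟨h1.trans hv1, hv2.trans_le (min_le_left _ _)⟩
    have hxu : x u < t := by rw [← hrinv t]; exact hxm hu (hrmem t) hu2
    have hxv : t < x v := by rw [← hrinv t]; exact hxm (hrmem t) hv hv1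
    filter_upwards [Ioo_mem_nhds hxu hxv] with s hs
    have e1 := hmono hs.1
    have e2 := hmono hs.2
    rw [hinv2 u hu] at e1
    rw [hinv2 v hv] at e2
    have e3 := (le_max_right rm (rfun t - ε)).trans_lt hu1
    have e4 := hv2.trans_le (min_le_right rp (rfun t + ε))
    rw [Real.dist_eq, abs_lt]
    constructor <;> linarith
  refine ⟨hmono, ?_, ?_⟩
  · intro t
    have h := HasDerivAt.of_local_left_inverse (hcont t) (hx _ (hrmem t))
      (one_div_pos.mpr (hFpos _ (hrmem t))).ne' (Eventually.of_forall hrinv)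
    simpa using h
  · rw [tendsto_order]
    constructor
    · intro y hy
      exact Eventually.of_forall fun t => hy.trans (hrmem t).1
    · intro y hy
      obtain ⟨u, hu1, hu2⟩ := exists_between (lt_min hy ((hrmem 0).1.trans (hrmem 0).2))
      have hu : u ∈ Set.Ioo rm rp := ⟨hu1, hu2.trans_le (min_le_right _ _)⟩
      filter_upwards [eventually_lt_atBot (x u)] with t ht
      have := hmono ht
      rw [hinv2 u hu] at this
      exact this.trans (hu2.trans_le (min_le_left _ _))

lemma mono0_aux (φ φ' : ℝ → ℝ) (x1 : ℝ) (h : ∀ t, HasDerivAt φ (φ' t) t) (h0 : ∀ t ≤ x1, 0 ≤ φ' t)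
    (hl : Tendsto φ atBot (nhds 0)) : ∀ t ≤ x1, 0 ≤ φ t := by
  have hm : MonotoneOn φ (Set.Iic x1) := by
    apply monotoneOn_of_deriv_nonneg (convex_Iic x1)
    · exact fun t _ => (h t).continuousAt.continuousWithinAt
    · exact fun t _ => (h t).differentiableAt.differentiableWithinAt
    · intro t ht
      rw [interior_Iic] at ht
      rw [(h t).deriv]
      exact h0 t (le_of_lt ht)
  intro t ht
  apply le_of_tendsto hl
  filter_upwards [eventually_le_atBot t] with s hs
  exact hm (hs.trans ht : s ∈ Set.Iic x1) ht hs

lemma gbounds_aux (r a g k c : ℝ → ℝ) (rm κ cm δ K x1 : ℝ) (hrm : 0 < rm) (hκ : 0 < κ) (hδ : 0 < δ) (hK : 0 ≤ K)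
    (hr : ∀ t, rm < r t) (hr' : ∀ t, HasDerivAt r (a t ^ 2 * r t ^ 2) t)
    (hrl : Tendsto r atBot (nhds rm))
    (ha : ∀ t, 0 < a t) (ha' : ∀ t, HasDerivAt a (a t * k t) t) (hal : Tendsto a atBot (nhds 0))
    (hg : ∀ t, 0 < g t) (hg' : ∀ t, HasDerivAt g (a t) t) (hgl : Tendsto g atBot (nhds 0))
    (hd : ∀ t ≤ x1, δ * (r t - rm) ≤ a t ^ 2)
    (hk : ∀ t ≤ x1, |k t - κ| ≤ K * (r t - rm)) (hkb : ∀ t ≤ x1, |k t| ≤ K)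
    (hc : ∀ t ≤ x1, |c t - cm| ≤ K * (r t - rm)) :
    ∃ C > 0, ∀ t ≤ x1, a t ≤ C * g t ∧ g t ≤ C * a t ∧ |a t - κ * g t| ≤ C * g t ^ 3 ∧
      |k t - κ| ≤ C * g t ^ 2 ∧ |c t - cm| ≤ C * g t ^ 2 ∧ |k t| ≤ C := by
  have h1 : ∀ t ≤ x1, a t ≤ K * g t := by
    have := mono0_aux (fun t => K * g t - a t) (fun t => K * a t - a t * k t) x1
      (fun t => ((hg' t).const_mul K).sub (ha' t))
      (fun t ht => by
        have := (abs_le.mp (hkb t ht)).2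
        nlinarith [ha t])
      (by simpa using (hgl.const_mul K).sub hal)
    intro t ht
    linarith [this t ht]
  have hs : ∀ t ≤ x1, r t - rm ≤ (K ^ 2 / δ) * g t ^ 2 := by
    intro t ht
    rw [div_mul_eq_mul_div, le_div_iff₀ hδ]
    have := hd t ht
    have h2 : a t ^ 2 ≤ (K * g t) ^ 2 := pow_le_pow_left₀ (ha t).le (h1 t ht) 2
    nlinarith
  set D := K * (K ^ 2 / δ) with hD
  have hD0 : 0 ≤ D := by positivity
  have hk2 : ∀ t ≤ x1, |k t - κ| ≤ D * g t ^ 2 := fun t ht =>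
    (hk t ht).trans (by rw [hD, mul_assoc]; exact mul_le_mul_of_nonneg_left (hs t ht) hK)
  have hc2 : ∀ t ≤ x1, |c t - cm| ≤ D * g t ^ 2 := fun t ht =>
    (hc t ht).trans (by rw [hD, mul_assoc]; exact mul_le_mul_of_nonneg_left (hs t ht) hK)
  have h3 : ∀ t ≤ x1, |a t - κ * g t| ≤ D * g t ^ 3 := by
    have l3 : Tendsto (fun t => D * g t ^ 3) atBot (nhds 0) := by
      simpa using (hgl.pow 3).const_mul D
    have l1 : Tendsto (fun t => a t - κ * g t) atBot (nhds 0) := by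
      simpa using hal.sub (hgl.const_mul κ)
    have d3 : ∀ t, HasDerivAt (fun t => D * g t ^ 3) (D * (3 * g t ^ 2 * a t)) t := fun t => by
      simpa using ((hg' t).pow 3).const_mul D
    have d1 : ∀ t, HasDerivAt (fun t => a t - κ * g t) (a t * k t - κ * a t) t := fun t =>
      (ha' t).sub ((hg' t).const_mul κ)
    have hp := mono0_aux (fun t => D * g t ^ 3 + (a t - κ * g t)) _ x1
      (fun t => (d3 t).add (d1 t))
      (fun t ht => by
        have h := (abs_le.mp (hk2 t ht)).1
        have h5 : 0 ≤ D * g t ^ 2 := by positivity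
        have := mul_nonneg (ha t).le (show 0 ≤ 3 * (D * g t ^ 2) + (k t - κ) by linarith)
        nlinarith) (by simpa using l3.add l1)
    have hm := mono0_aux (fun t => D * g t ^ 3 - (a t - κ * g t)) _ x1
      (fun t => (d3 t).sub (d1 t))
      (fun t ht => by
        have h := (abs_le.mp (hk2 t ht)).2
        have h5 : 0 ≤ D * g t ^ 2 := by positivity
        have := mul_nonneg (ha t).le (show 0 ≤ 3 * (D * g t ^ 2) - (k t - κ) by linarith)
        nlinarith) (by simpa using l3.sub l1)
    intro t ht
    rw [abs_le]
    constructor <;> linarith [hp t ht, hm t ht]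
  have h4 : ∀ t ≤ x1, (Real.sqrt δ * rm ^ 2 / 2) * g t ≤ Real.sqrt (r t - rm) := by
    have := mono0_aux (fun t => Real.sqrt (r t - rm) - (Real.sqrt δ * rm ^ 2 / 2) * g t) _ x1
      (fun t => (((hr' t).sub_const rm).sqrt (sub_pos.mpr (hr t)).ne').sub
        ((hg' t).const_mul (Real.sqrt δ * rm ^ 2 / 2)))
      (fun t ht => by
        have hp : 0 < Real.sqrt (r t - rm) := Real.sqrt_pos.mpr (sub_pos.mpr (hr t))
        have e1 : Real.sqrt δ * Real.sqrt (r t - rm) ≤ a t := by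
          rw [← Real.sqrt_mul hδ.le]
          exact Real.sqrt_le_iff.mpr ⟨(ha t).le, hd t ht⟩
        rw [sub_nonneg, le_div_iff₀ (by positivity)]
        have e2 : rm ^ 2 ≤ r t ^ 2 := pow_le_pow_left₀ hrm.le (hr t).le 2
        calc Real.sqrt δ * rm ^ 2 / 2 * a t * (2 * Real.sqrt (r t - rm))
            = (a t * rm ^ 2) * (Real.sqrt δ * Real.sqrt (r t - rm)) := by ring
          _ ≤ (a t * r t ^ 2) * a t := by
            have := ha t
            gcongr
          _ = a t ^ 2 * r t ^ 2 := by ring)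
      (by
        have : Tendsto (fun t => Real.sqrt (r t - rm)) atBot (nhds (Real.sqrt (rm - rm))) :=
          (hrl.sub_const rm).sqrt
        rw [sub_self, Real.sqrt_zero] at this
        simpa using this.sub (hgl.const_mul (Real.sqrt δ * rm ^ 2 / 2)))
    intro t ht
    linarith [this t ht]
  have hsd : 0 < Real.sqrt δ := Real.sqrt_pos.mpr hδ
  have h5 : ∀ t ≤ x1, g t ≤ (2 / (δ * rm ^ 2)) * a t := by
    intro t ht
    have e1 : Real.sqrt δ * Real.sqrt (r t - rm) ≤ a t := by
      rw [← Real.sqrt_mul hδ.le]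
      exact Real.sqrt_le_iff.mpr ⟨(ha t).le, hd t ht⟩
    rw [div_mul_eq_mul_div, le_div_iff₀ (by positivity)]
    have := mul_le_mul_of_nonneg_left (h4 t ht) hsd.le
    have h6 : Real.sqrt δ * Real.sqrt δ = δ := Real.mul_self_sqrt hδ.le
    calc g t * (δ * rm ^ 2) = 2 * (Real.sqrt δ * (Real.sqrt δ * rm ^ 2 / 2 * g t)) := by
          linear_combination (-(g t * rm ^ 2)) * h6
      _ ≤ _ := by linarith
  refine ⟨K + D + 2 / (δ * rm ^ 2), by positivity, fun t ht => ?_⟩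
  have e0 : 0 < 2 / (δ * rm ^ 2) := by positivity
  have g1 := hg t
  have a1 := ha t
  refine ⟨(h1 t ht).trans ?_, (h5 t ht).trans ?_, (h3 t ht).trans ?_, (hk2 t ht).trans ?_, (hc2 t ht).trans ?_,
    (hkb t ht).trans ?_⟩
  any_goals apply mul_le_mul_of_nonneg_right _ (by positivity)
  all_goals linarith

lemma pbounds_aux (r a g k c : ℝ → ℝ) (κ cm e θ lam C x1 A : ℝ) (hκ : 0 < κ) (hC : 0 < C)
    (hr : ∀ t, 0 < r t) (hr' : ∀ t, HasDerivAt r (a t ^ 2 * r t ^ 2) t)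
    (ha : ∀ t, 0 < a t) (ha' : ∀ t, HasDerivAt a (a t * k t) t)
    (hg : ∀ t, 0 < g t) (hg' : ∀ t, HasDerivAt g (a t) t) (hgA : ∀ t, g t ≤ A)
    (hc : ∀ t, c t = e / r t) (hθ : lam - cm = κ * θ)
    (hall : ∀ t ≤ x1, a t ≤ C * g t ∧ g t ≤ C * a t ∧ |a t - κ * g t| ≤ C * g t ^ 3 ∧
      |k t - κ| ≤ C * g t ^ 2 ∧ |c t - cm| ≤ C * g t ^ 2 ∧ |k t| ≤ C) :
    ∃ p p' : ℝ → ℝ, ∃ K, 0 ≤ K ∧ (∀ t, HasDerivAt p (p' t) t) ∧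
      (∀ t, lam - c t = a t * p t + a t * θ / g t) ∧
      ∀ t ≤ x1, |p t| ≤ K ∧ |p t| ≤ K * g t ∧ |p' t| ≤ K * a t := by
  have hA : 0 < A := (hg 0).trans_le (hgA 0)
  have hc' : ∀ t, HasDerivAt c (-e * a t ^ 2) t := by
    intro t
    have : c = fun t => e / r t := funext hc
    rw [this]
    have h := (hr' t).fun_inv (hr t).ne'
    have h2 := h.const_mul e
    simp only [← div_eq_mul_inv] at h2
    refine h2.congr_deriv ?_
    have := (hr t).ne'
    field_simp
  set B1 := (|θ| * C + C) * C with hB1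
  set B2 := (|θ| * C * (C + κ) + κ * |θ| * C + C * C) * C ^ 2 with hB2
  refine ⟨fun t => (lam - c t) / a t - θ / g t,
    fun t => (e * a t ^ 2 * a t - (lam - c t) * (a t * k t)) / a t ^ 2 + θ * a t / g t ^ 2,
    B1 * A + B1 + |e| + B2, by positivity, ?_, ?_, ?_⟩
  · intro t
    have h1 := ((hc' t).const_sub lam).div (ha' t) (ha t).ne'
    have h2 := ((hg' t).fun_inv (hg t).ne').const_mul θ
    have h3 := h1.sub h2
    simp only [← div_eq_mul_inv] at h3
    refine h3.congr_deriv ?_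
    have := (ha t).ne'
    have := (hg t).ne'
    field_simp
    ring
  · intro t
    have := (ha t).ne'
    have := (hg t).ne'
    field_simp
    ring
  · intro t ht
    obtain ⟨q1, q2, q3, q4, q5, q6⟩ := hall t ht
    have a0 := ha t
    have g0 := hg t
    have hl : lam - c t = κ * θ - (c t - cm) := by linarith
    have e1 : (lam - c t) / a t - θ / g t = (-(θ * (a t - κ * g t)) - (c t - cm) * g t) / (a t * g t) := by
      rw [hl]
      field_simp
      ring
    have b1 : |(lam - c t) / a t - θ / g t| ≤ B1 * g t := by
      rw [e1, abs_div, abs_of_pos (mul_pos a0 g0), div_le_iff₀ (mul_pos a0 g0)]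
      have : |-(θ * (a t - κ * g t)) - (c t - cm) * g t| ≤ |θ| * (C * g t ^ 3) + C * g t ^ 2 * g t := by
        refine (abs_sub _ _).trans ?_
        rw [abs_neg, abs_mul, abs_mul, abs_of_pos g0]
        gcongr
      refine this.trans ?_
      calc |θ| * (C * g t ^ 3) + C * g t ^ 2 * g t = (|θ| * C + C) * g t * g t * g t := by ring
        _ ≤ (|θ| * C + C) * g t * g t * (C * a t) := by gcongr
        _ = _ := by rw [hB1]; ring
    have e2 : (e * a t ^ 2 * a t - (lam - c t) * (a t * k t)) / a t ^ 2 + θ * a t / g t ^ 2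
      = e * a t + (θ * ((a t - κ * g t) * (a t + κ * g t)) - κ * θ * (k t - κ) * g t ^ 2
          + (c t - cm) * k t * g t ^ 2) / (a t * g t ^ 2) := by
      rw [hl]
      field_simp
      ring
    have b2 : |(θ * ((a t - κ * g t) * (a t + κ * g t)) - κ * θ * (k t - κ) * g t ^ 2
          + (c t - cm) * k t * g t ^ 2) / (a t * g t ^ 2)| ≤ B2 * a t := by
      have pos : 0 < a t * g t ^ 2 := by positivity
      rw [abs_div, abs_of_pos pos, div_le_iff₀ pos]
      have t1 : |θ * ((a t - κ * g t) * (a t + κ * g t))| ≤ |θ| * ((C * g t ^ 3) * (C * g t + κ * g t)) := by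
        rw [abs_mul, abs_mul, abs_of_pos (show 0 < a t + κ * g t by positivity)]
        gcongr
      have t2 : |κ * θ * (k t - κ) * g t ^ 2| ≤ κ * |θ| * (C * g t ^ 2) * g t ^ 2 := by
        rw [abs_mul, abs_mul, abs_mul, abs_of_pos hκ, abs_of_pos (show 0 < g t ^ 2 by positivity)]
        gcongr
      have t3 : |(c t - cm) * k t * g t ^ 2| ≤ (C * g t ^ 2) * C * g t ^ 2 := by
        rw [abs_mul, abs_mul, abs_of_pos (show 0 < g t ^ 2 by positivity)]
        gcongr
      have t4 := (abs_add_le (θ * ((a t - κ * g t) * (a t + κ * g t)) - κ * θ * (k t - κ) * g t ^ 2)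
        ((c t - cm) * k t * g t ^ 2)).trans (add_le_add (abs_sub _ _) le_rfl)
      have t5 : g t ^ 2 ≤ (C * a t) ^ 2 := by gcongr
      calc _ ≤ (|θ| * C * (C + κ) + κ * |θ| * C + C * C) * g t ^ 2 * g t ^ 2 := by
            refine t4.trans ((add_le_add (add_le_add t1 t2) t3).trans (le_of_eq ?_))
            ring
        _ ≤ (|θ| * C * (C + κ) + κ * |θ| * C + C * C) * g t ^ 2 * (C * a t) ^ 2 := by gcongr
        _ = _ := by rw [hB2]; ring
    have hB10 : 0 ≤ B1 := by positivity
    have hB20 : 0 ≤ B2 := by positivity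
    have he0 := abs_nonneg e
    have hBA : 0 ≤ B1 * A := by positivity
    refine ⟨?_, ?_, ?_⟩
    · refine b1.trans ?_
      have := mul_le_mul_of_nonneg_left (hgA t) hB10
      linarith
    · refine b1.trans ?_
      apply mul_le_mul_of_nonneg_right _ g0.le
      linarith
    · show |(e * a t ^ 2 * a t - (lam - c t) * (a t * k t)) / a t ^ 2 + θ * a t / g t ^ 2| ≤ _
      rw [e2]
      refine (abs_add_le _ _).trans ((add_le_add le_rfl b2).trans ?_)
      rw [abs_mul, abs_of_pos a0, ← add_mul]
      apply mul_le_mul_of_nonneg_right _ a0.le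
      linarith

lemma lip_aux (f f' : ℝ → ℝ) (u v : ℝ) (hd : ∀ r ∈ Set.Icc u v, HasDerivAt f (f' r) r)
    (hc : ContinuousOn f' (Set.Icc u v)) :
    ∃ K, 0 ≤ K ∧ ∀ r ∈ Set.Icc u v, |f r - f u| ≤ K * (r - u) := by
  obtain ⟨K, hK⟩ := isCompact_Icc.exists_bound_of_continuousOn hc
  refine ⟨max K 0, le_max_right _ _, fun r hr => ?_⟩
  have h := Convex.norm_image_sub_le_of_norm_hasDerivWithin_le (f := f) (f' := f') (C := max K 0)
    (fun y hy => (hd y hy).hasDerivWithinAt) (fun y hy => (hK y hy).trans (le_max_left _ _))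
    (convex_Icc u v) (Set.left_mem_Icc.mpr (hr.1.trans hr.2)) hr
  simpa [Real.norm_eq_abs, abs_of_nonneg (sub_nonneg.mpr hr.1)] using h

lemma g_aux (a g : ℝ → ℝ) (ha : ∀ t, 0 < a t) (hcont : Continuous a) (haint : Integrable a)
    (hg : ∀ t, g t = ∫ s in Set.Iic t, a s) :
    (∀ t, HasDerivAt g (a t) t) ∧ (∀ t, 0 < g t) ∧ (∀ t, g t ≤ ∫ s, a s) ∧ Tendsto g atBot (nhds 0)
      ∧ StrictMono g := by
  have hge : g = fun t => ∫ s in Set.Iic t, a s := funext hg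
  have hd : ∀ t, HasDerivAt g (a t) t := by
    intro t
    have h1 : g = fun t => g 0 + ∫ s in (0:ℝ)..t, a s := by
      funext t
      rw [← intervalIntegral.integral_Iic_sub_Iic haint.integrableOn haint.integrableOn, hg, hg]
      ring
    rw [h1]
    apply HasDerivAt.const_add
    exact intervalIntegral.integral_hasDerivAt_right (haint.intervalIntegrable)
      (hcont.stronglyMeasurableAtFilter _ _) hcont.continuousAt
  have hsm : StrictMono g := strictMono_of_deriv_pos fun t => by rw [(hd t).deriv]; exact ha t
  have hnn : ∀ t, 0 ≤ g t := fun t => by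
    rw [hg]; exact setIntegral_nonneg measurableSet_Iic fun s _ => (ha s).le
  refine ⟨hd, fun t => (hnn (t - 1)).trans_lt (hsm (by linarith)), fun t => ?_, ?_, hsm⟩
  · rw [hg]
    exact setIntegral_le_integral haint (Eventually.of_forall fun s => (ha s).le)
  · rw [hge]
    exact MeasureTheory.tendsto_integral_Iic_zero tendsto_id

lemma conc_aux (M Q Λ : ℝ) (hΛ : 0 < Λ)
    (rn rc rm rp : ℝ) (hrn : rn < 0) (hrc : 0 < rc) (hrcm : rc < rm) (hrmp : rm < rp)
    (F : ℝ → ℝ)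
    (hF : ∀ r, F r = 1 - 2 * M / r + Q ^ 2 / r ^ 2 - Λ * r ^ 2 / 3)
    (hFm : F rm = 0) (hFpos : ∀ r ∈ Set.Ioo rm rp, 0 < F r)
    (hfac : ∀ r, r ≠ 0 → F r = -(Λ / 3) * ((r - rn) * (r - rc) * (r - rm) * (r - rp)) / r ^ 2)
    (κm : ℝ) (hκm : κm = deriv F rm / 2)
    (rfun : ℝ → ℝ) (hrmem : ∀ s, rfun s ∈ Set.Ioo rm rp) (hmono : StrictMono rfun)
    (hr' : ∀ t, HasDerivAt rfun (F (rfun t)) t) (hrl : Tendsto rfun atBot (nhds rm))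
    (e : ℝ) (a c : ℝ → ℝ)
    (ha : ∀ s, a s = Real.sqrt (F (rfun s)) / rfun s)
    (hc : ∀ s, c s = e / rfun s) (cm : ℝ) (hcm : cm = e / rm) (x1 : ℝ) :
    ∃ k : ℝ → ℝ, ∃ δ > 0, ∃ K, 0 ≤ K ∧ (∀ t, 0 < a t) ∧ (∀ t, F (rfun t) = a t ^ 2 * rfun t ^ 2) ∧
      (∀ t, HasDerivAt a (a t * k t) t) ∧ Tendsto a atBot (nhds 0) ∧
      (∀ t ≤ x1, δ * (rfun t - rm) ≤ a t ^ 2) ∧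
      (∀ t ≤ x1, |k t - κm| ≤ K * (rfun t - rm)) ∧ (∀ t ≤ x1, |k t| ≤ K) ∧
      (∀ t ≤ x1, |c t - cm| ≤ K * (rfun t - rm)) := by
  have hrm : 0 < rm := hrc.trans hrcm
  have hrpos : ∀ t, 0 < rfun t := fun t => hrm.trans (hrmem t).1
  have hae : a = fun s => Real.sqrt (F (rfun s)) / rfun s := funext ha
  have hFe : F = fun r => 1 - 2 * M / r + Q ^ 2 / r ^ 2 - Λ * r ^ 2 / 3 := funext hF
  have hFd : ∀ r, 0 < r → HasDerivAt F (2 * M / r ^ 2 - 2 * Q ^ 2 / r ^ 3 - 2 * Λ * r / 3) r := by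
    intro r hr
    have i1 : HasDerivAt (fun r : ℝ => r⁻¹) (-(r ^ 2)⁻¹) r := hasDerivAt_inv hr.ne'
    have h := ((i1.const_mul (2 * M)).const_sub 1).add ((i1.pow 2).const_mul (Q ^ 2)) |>.sub
      (((hasDerivAt_id r).pow 2).const_mul (Λ / 3))
    have he : F = ((fun x : ℝ => 1 - 2 * M * x⁻¹) + fun y => Q ^ 2 * ((fun r : ℝ => r⁻¹) ^ 2) y)
        - fun y => Λ / 3 * (id ^ 2) y := by
      funext r
      simp [hF]
      ring
    rw [he]
    refine h.congr_deriv ?_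
    simp
    field_simp
    ring
  set kk : ℝ → ℝ := fun r => (2 * M / r ^ 2 - 2 * Q ^ 2 / r ^ 3 - 2 * Λ * r / 3) / 2 - F r / r with hkk
  have hkm : kk rm = κm := by
    rw [hkk, hκm, (hFd rm hrm).deriv]
    simp [hFm]
  have hkk2 : ∀ r, 0 < r → kk r = 3 * M * (r⁻¹) ^ 2 - 2 * Q ^ 2 * (r⁻¹) ^ 3 - r⁻¹ := by
    intro r hr
    rw [hkk]
    simp only [hF]
    field_simp
    ring
  obtain ⟨K1, hK1, hL1⟩ := lip_aux (fun r => 3 * M * (r⁻¹) ^ 2 - 2 * Q ^ 2 * (r⁻¹) ^ 3 - r⁻¹)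
    (fun r => 3 * M * (2 * r⁻¹ * (-(r ^ 2)⁻¹)) - 2 * Q ^ 2 * (3 * (r⁻¹) ^ 2 * (-(r ^ 2)⁻¹)) - (-(r ^ 2)⁻¹)) rm rp
    (by
      intro r hr
      have hr0 : 0 < r := hrm.trans_le hr.1
      have i1 : HasDerivAt (fun r : ℝ => r⁻¹) (-(r ^ 2)⁻¹) r := hasDerivAt_inv hr0.ne'
      have h := (((i1.fun_pow 2).const_mul (3 * M)).sub ((i1.fun_pow 3).const_mul (2 * Q ^ 2))).sub i1
      refine h.congr_deriv ?_
      norm_num)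
    (by
      have : ∀ r ∈ Set.Icc rm rp, r ≠ 0 := fun r hr => (hrm.trans_le hr.1).ne'
      have h2 : ∀ r ∈ Set.Icc rm rp, r ^ 2 ≠ 0 := fun r hr => pow_ne_zero 2 (this r hr)
      fun_prop (disch := assumption))
  obtain ⟨K2, hK2, hL2⟩ := lip_aux (fun r => e * r⁻¹) (fun r => e * (-(r ^ 2)⁻¹)) rm rp
    (by
      intro r hr
      have hr0 : 0 < r := hrm.trans_le hr.1
      exact (hasDerivAt_inv hr0.ne').const_mul e)
    (by
      have h2 : ∀ r ∈ Set.Icc rm rp, r ^ 2 ≠ 0 := fun r hr => pow_ne_zero 2 (hrm.trans_le hr.1).ne'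
      fun_prop (disch := assumption))
  set δ := Λ / 3 * ((rm - rn) * (rm - rc) * (rp - rfun x1)) / rp ^ 4 with hδ
  have hδ0 : 0 < δ := by
    have h1 : 0 < rm - rn := by linarith
    have h2 : 0 < rm - rc := by linarith
    have h3 : 0 < rp - rfun x1 := by linarith [(hrmem x1).2]
    have h4 : 0 < rp := by linarith
    positivity
  have hF2 : ∀ t, F (rfun t) = a t ^ 2 * rfun t ^ 2 := by
    intro t
    have := (hrpos t).ne'
    rw [ha, div_pow, Real.sq_sqrt (hFpos _ (hrmem t)).le]
    field_simp
  have hapos : ∀ t, 0 < a t := fun t => by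
    rw [ha]; exact div_pos (Real.sqrt_pos.mpr (hFpos _ (hrmem t))) (hrpos t)
  have hk1 : ∀ t, |kk (rfun t) - κm| ≤ K1 * (rfun t - rm) := by
    intro t
    have h := hL1 (rfun t) ⟨(hrmem t).1.le, (hrmem t).2.le⟩
    rw [← hkk2 _ (hrpos t), ← hkk2 _ hrm, hkm] at h
    exact h
  refine ⟨fun t => kk (rfun t), δ, hδ0, K1 + K2 + |κm| + K1 * (rp - rm), ?_, hapos, hF2, ?_, ?_, ?_, ?_, ?_, ?_⟩
  · have : 0 < rp - rm := by linarith
    positivity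
  · intro t
    have h1 := ((hFd _ (hrpos t)).comp t (hr' t)).sqrt (hFpos _ (hrmem t)).ne'
    have h2 := h1.div (hr' t) (hrpos t).ne'
    have he : a = (fun y => √((F ∘ rfun) y)) / rfun := by
      funext s; simp [ha]
    rw [he]
    refine h2.congr_deriv ?_
    simp only [Pi.div_apply, Function.comp_apply, hkk]
    have hs : 0 < Real.sqrt (F (rfun t)) := Real.sqrt_pos.mpr (hFpos _ (hrmem t))
    have hss := Real.sq_sqrt (hFpos _ (hrmem t)).le
    set s := Real.sqrt (F (rfun t)) with hsdef
    rw [← hss]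
    have := hrpos t
    field_simp
  · have h1 : Tendsto (fun s => Real.sqrt (F (rfun s)) / rfun s) atBot (nhds (Real.sqrt (F rm) / rm)) :=
      (((hFd rm hrm).continuousAt.tendsto.comp hrl).sqrt).div hrl hrm.ne'
    rw [hFm, Real.sqrt_zero, zero_div] at h1
    rw [hae]; exact h1
  · intro t ht
    obtain ⟨r1, r2⟩ := hrmem t
    have hle : rfun t ≤ rfun x1 := hmono.monotone ht
    have r0 := hrpos t
    have e1 : a t ^ 2 = Λ / 3 * ((rfun t - rn) * (rfun t - rc) * (rp - rfun t)) / rfun t ^ 4 * (rfun t - rm) := by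
      have h := hF2 t
      rw [hfac _ r0.ne'] at h
      field_simp at h ⊢
      linarith
    rw [e1]
    apply mul_le_mul_of_nonneg_right _ (by linarith)
    rw [hδ]
    have h1 : 0 < rm - rn := by linarith
    have h2 : 0 < rm - rc := by linarith
    have h3 : 0 < rp - rfun x1 := by linarith [(hrmem x1).2]
    have h1' : 0 < rfun t - rn := by linarith
    have h2' : 0 < rfun t - rc := by linarith
    gcongr
  · intro t _
    refine (hk1 t).trans ?_
    have h1 : 0 < rp - rm := by linarith
    apply mul_le_mul_of_nonneg_right _ (by linarith [(hrmem t).1])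
    have := abs_nonneg κm
    nlinarith [mul_nonneg hK1 h1.le]
  · intro t _
    have h1 := abs_sub_abs_le_abs_sub (kk (rfun t)) κm
    have h2 := hk1 t
    have h3 : K1 * (rfun t - rm) ≤ K1 * (rp - rm) :=
      mul_le_mul_of_nonneg_left (by linarith [(hrmem t).2]) hK1
    linarith
  · intro t _
    have h := hL2 (rfun t) ⟨(hrmem t).1.le, (hrmem t).2.le⟩
    simp only [← div_eq_mul_inv] at h
    rw [← hc, ← hcm] at h
    refine h.trans ?_
    have h1 : 0 < rp - rm := by linarith
    apply mul_le_mul_of_nonneg_right _ (by linarith [(hrmem t).1])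
    have := abs_nonneg κm
    nlinarith [mul_nonneg hK1 h1.le]

lemma phase_aux (f h : ℝ → ℝ) (hl : Tendsto (fun t => f t - h t) atBot (nhds 0)) :
    Tendsto (fun t => Complex.exp (Complex.I * ((f t : ℝ) : ℂ)) - Complex.exp (Complex.I * ((h t : ℝ) : ℂ)))
      atBot (nhds 0) := by
  have h1 : Tendsto (fun t => Complex.exp (Complex.I * ((f t - h t : ℝ) : ℂ)) - 1) atBot (nhds 0) := by
    have hc : Continuous fun y : ℝ => Complex.exp (Complex.I * (y : ℂ)) - 1 := by fun_prop
    have := (hc.tendsto 0).comp hl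
    simpa [Function.comp_def] using this
  rw [tendsto_zero_iff_norm_tendsto_zero] at h1 ⊢
  refine h1.congr fun t => ?_
  have : Complex.exp (Complex.I * ((f t : ℝ) : ℂ)) - Complex.exp (Complex.I * ((h t : ℝ) : ℂ))
      = Complex.exp (((h t : ℝ) : ℂ) * Complex.I) * (Complex.exp (Complex.I * ((f t - h t : ℝ) : ℂ)) - 1) := by
    rw [mul_sub, ← Complex.exp_add, mul_one]
    push_cast
    ring_nf
  rw [this, norm_mul, Complex.norm_exp_ofReal_mul_I, one_mul]

lemma unimod_aux (f : ℝ → ℂ) (e h : ℝ → ℝ) (L : ℂ) (he : Tendsto (fun t => -e t - h t) atBot (nhds 0))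
    (hl : Tendsto (fun t => Complex.exp (Complex.I * ((e t : ℝ) : ℂ)) * f t) atBot (nhds L)) :
    Tendsto (fun t => f t - L * Complex.exp (Complex.I * ((h t : ℝ) : ℂ))) atBot (nhds 0) := by
  have h1 := (phase_aux (fun t => -e t) h he).const_mul L
  have h2 : Tendsto (fun t => Complex.exp (((-e t : ℝ) : ℂ) * Complex.I) *
      (Complex.exp (Complex.I * ((e t : ℝ) : ℂ)) * f t - L)) atBot (nhds 0) := by
    have h3 : Tendsto (fun t => Complex.exp (Complex.I * ((e t : ℝ) : ℂ)) * f t - L) atBot (nhds 0) := by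
      simpa using hl.sub_const L
    rw [tendsto_zero_iff_norm_tendsto_zero] at h3 ⊢
    refine h3.congr fun t => ?_
    rw [norm_mul, Complex.norm_exp_ofReal_mul_I, one_mul]
  have h4 := h2.add h1
  rw [mul_zero, add_zero] at h4
  refine h4.congr fun t => ?_
  have h5 : Complex.exp (((-e t : ℝ) : ℂ) * Complex.I) * Complex.exp (Complex.I * ((e t : ℝ) : ℂ)) = 1 := by
    rw [← Complex.exp_add]
    push_cast
    ring_nf
    simp
  have h6 : Complex.exp (Complex.I * ((-e t : ℝ) : ℂ)) = Complex.exp (((-e t : ℝ) : ℂ) * Complex.I) := by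
    rw [mul_comm]
  rw [h6]
  linear_combination (f t) * h5

lemma glog_aux (a g : ℝ → ℝ) (κ am C x1 : ℝ) (hκ : 0 < κ) (ham : 0 < am)
    (ha : ∀ t, 0 < a t) (hg : ∀ t, 0 < g t) (hgl : Tendsto g atBot (nhds 0))
    (haas : (fun s => a s - am * Real.exp (κ * s)) =O[atBot] fun s => Real.exp (3 * κ * s))
    (hag : ∀ t ≤ x1, |a t - κ * g t| ≤ C * g t ^ 3) :
    Tendsto (fun t => Real.log (g t) - κ * t) atBot (nhds (Real.log (am / κ))) := by
  have hexp : ∀ y, 0 < y → Tendsto (fun t : ℝ => Real.exp (y * t)) atBot (nhds 0) := fun y hy =>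
    Real.tendsto_exp_atBot.comp (tendsto_id.const_mul_atBot hy)
  have h1 : Tendsto (fun t => a t * Real.exp (-(κ * t))) atBot (nhds am) := by
    have h2 : (fun s => (a s - am * Real.exp (κ * s)) * Real.exp (-(κ * s))) =O[atBot]
        fun s => Real.exp (3 * κ * s) * Real.exp (-(κ * s)) := haas.mul (isBigO_refl _ _)
    have h3 : Tendsto (fun s => Real.exp (3 * κ * s) * Real.exp (-(κ * s))) atBot (nhds 0) := by
      refine (hexp (2 * κ) (by positivity)).congr fun t => ?_
      rw [← Real.exp_add]; ring_nf
    have h4 := (h2.trans_tendsto h3).add_const am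
    rw [zero_add] at h4
    refine h4.congr fun t => ?_
    have : Real.exp (κ * t) * Real.exp (-(κ * t)) = 1 := by rw [← Real.exp_add]; simp
    linear_combination (-am) * this
  have h2 : Tendsto (fun t => a t / g t) atBot (nhds κ) := by
    have h3 : Tendsto (fun t => C * g t ^ 2) atBot (nhds 0) := by simpa using (hgl.pow 2).const_mul C
    have h4 : Tendsto (fun t => a t / g t - κ) atBot (nhds 0) := by
      apply squeeze_zero_norm' _ h3
      filter_upwards [eventually_le_atBot x1] with t ht
      have g0 := hg t
      have : a t / g t - κ = (a t - κ * g t) / g t := by field_simp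
      rw [Real.norm_eq_abs, this, abs_div, abs_of_pos g0, div_le_iff₀ g0]
      refine (hag t ht).trans (le_of_eq (by ring))
    simpa using h4.add_const κ
  have h3 := (h1.div h2 hκ.ne').log (by positivity)
  refine h3.congr fun t => ?_
  have g0 := hg t
  have a0 := ha t
  have : a t * Real.exp (-(κ * t)) / (a t / g t) = g t * Real.exp (-(κ * t)) := by field_simp
  rw [Pi.div_apply, this, Real.log_mul g0.ne' (Real.exp_pos _).ne', Real.log_exp]
  ring

/-- The conclusion of the scalar comparison estimate. -/
def CoreBound (a g ℓ μ : ℝ → ℝ) (θ x1 C : ℝ) : Prop :=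
  ∀ z : ℂ, 1 ≤ ‖z‖ → ∀ U W u0 w0 : ℝ → ℂ,
      (∀ t, HasDerivAt U (Complex.I * (ℓ t : ℂ) * U t
        + (z * (a t : ℂ) - Complex.I * ((a t * μ t : ℝ) : ℂ)) * W t) t) →
      (∀ t, HasDerivAt W (-(Complex.I * (ℓ t : ℂ)) * W t
        + (z * (a t : ℂ) + Complex.I * ((a t * μ t : ℝ) : ℂ)) * U t) t) →
      (∀ t, HasDerivAt u0 (Complex.I * ((a t * θ / g t : ℝ) : ℂ) * u0 t
        + z * (a t : ℂ) * w0 t) t) →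
      (∀ t, HasDerivAt w0 (-(Complex.I * ((a t * θ / g t : ℝ) : ℂ)) * w0 t
        + z * (a t : ℂ) * u0 t) t) →
      (∀ᶠ t in atBot, ‖U t‖ ≤ 2) → (∀ᶠ t in atBot, ‖W t‖ ≤ 2) →
      Tendsto (fun t => U t - u0 t) atBot (nhds 0) →
      Tendsto (fun t => W t - w0 t) atBot (nhds 0) →
      ∀ t ≤ x1, ‖U t - u0 t‖ ≤ C * Real.exp (|z.re| * g t) / ‖z‖ ∧
        ‖W t - w0 t‖ ≤ C * Real.exp (|z.re| * g t) / ‖z‖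

lemma model_aux (a g ℓ μ : ℝ → ℝ) (θ x1 C κ L : ℝ) (hH : CoreBound a g ℓ μ θ x1 C)
    (hg : ∀ t, 0 < g t) (hg' : ∀ t, HasDerivAt g (a t) t) (hgl : Tendsto g atBot (nhds 0))
    (hlog : Tendsto (fun t => Real.log (g t) - κ * t) atBot (nhds (-L)))
    (ν ρ : ℂ) (hν : ν = 1 / 2 - Complex.I * (θ : ℂ)) (hρ : ρ = 1 / 2 + Complex.I * (θ : ℂ))
    (z : ℂ) (hz : 1 ≤ ‖z‖) (U W : ℝ → ℂ) (α β : ℂ) (hα : ‖α‖ ≤ 1) (hβ : ‖β‖ ≤ 1)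
    (hU : ∀ t, HasDerivAt U (Complex.I * (ℓ t : ℂ) * U t
        + (z * (a t : ℂ) - Complex.I * ((a t * μ t : ℝ) : ℂ)) * W t) t)
    (hW : ∀ t, HasDerivAt W (-(Complex.I * (ℓ t : ℂ)) * W t
        + (z * (a t : ℂ) + Complex.I * ((a t * μ t : ℝ) : ℂ)) * U t) t)
    (hUl : Tendsto (fun t => U t - α * Complex.exp (Complex.I * ((κ * θ * t : ℝ) : ℂ))) atBot (nhds 0))
    (hWl : Tendsto (fun t => W t - β * Complex.exp (Complex.I * ((-(κ * θ * t) : ℝ) : ℂ))) atBot (nhds 0)) :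
    ∀ t ≤ x1, ‖U t - (α * (Complex.exp (Complex.I * (θ : ℂ) * (L : ℂ)) * Bfun ν z (g t))
        + β * (Complex.exp (-(Complex.I * (θ : ℂ)) * (L : ℂ)) * Dfun ρ z (g t)))‖
          ≤ C * Real.exp (|z.re| * g t) / ‖z‖ ∧
      ‖W t - (α * (Complex.exp (Complex.I * (θ : ℂ) * (L : ℂ)) * Dfun ν z (g t))
        + β * (Complex.exp (-(Complex.I * (θ : ℂ)) * (L : ℂ)) * Bfun ρ z (g t)))‖
          ≤ C * Real.exp (|z.re| * g t) / ‖z‖ := by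
  have hνre : ν.re = 1 / 2 := by rw [hν]; simp
  have hρre : ρ.re = 1 / 2 := by rw [hρ]; simp
  have n1 : 1 / 2 - ν = Complex.I * θ := by rw [hν]; ring
  have n2 : 1 / 2 - ρ = -(Complex.I * θ) := by rw [hρ]; ring
  have dB1 := fun t => (Bfun_deriv ν z hνre (g t) (hg t)).scomp t (hg' t)
  have dD1 := fun t => (Dfun_deriv ν z hνre (g t) (hg t)).scomp t (hg' t)
  have dB2 := fun t => (Bfun_deriv ρ z hρre (g t) (hg t)).scomp t (hg' t)
  have dD2 := fun t => (Dfun_deriv ρ z hρre (g t) (hg t)).scomp t (hg' t)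
  have hgw : Tendsto g atBot (nhdsWithin 0 (Set.Ioi 0)) :=
    tendsto_nhdsWithin_iff.mpr ⟨hgl, Eventually.of_forall hg⟩
  have lB1 := (Bfun_lim ν z hνre).comp hgw
  have lB2 := (Bfun_lim ρ z hρre).comp hgw
  have lD1 := (Dfun_lim ν z hνre).comp hgw
  have lD2 := (Dfun_lim ρ z hρre).comp hgw
  rw [n1] at lB1
  rw [n2] at lB2
  have hlog2 : Tendsto (fun t => (θ * L + θ * Real.log (g t)) - κ * θ * t) atBot (nhds 0) := by
    have h := (hlog.const_mul θ).add_const (θ * L)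
    rw [show θ * -L + θ * L = 0 by ring] at h
    exact h.congr fun t => by ring
  have hlog3 : Tendsto (fun t => -(θ * L + θ * Real.log (g t)) - (-(κ * θ * t))) atBot (nhds 0) := by
    have h := hlog2.neg
    rw [neg_zero] at h
    exact h.congr fun t => by ring
  have p1 := phase_aux _ _ hlog2
  have p2 := phase_aux _ _ hlog3
  have q1 : Tendsto (fun t => Complex.exp (Complex.I * ((κ * θ * t : ℝ) : ℂ))
      - Complex.exp (Complex.I * (θ : ℂ) * (L : ℂ)) * Bfun ν z (g t)) atBot (nhds 0) := by
    have h := (p1.add (lB1.const_mul (Complex.exp (Complex.I * (θ : ℂ) * (L : ℂ))))).neg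
    rw [mul_zero, add_zero, neg_zero] at h
    refine h.congr fun t => ?_
    have e1 : Complex.exp (Complex.I * ((θ * L + θ * Real.log (g t) : ℝ) : ℂ))
        = Complex.exp (Complex.I * (θ : ℂ) * (L : ℂ)) * Complex.exp (Complex.I * θ * ((Real.log (g t) : ℝ) : ℂ)) := by
      rw [← Complex.exp_add]; push_cast; ring_nf
    simp only [Function.comp_apply]
    rw [e1]; ring
  have q2 : Tendsto (fun t => Complex.exp (Complex.I * ((-(κ * θ * t) : ℝ) : ℂ))
      - Complex.exp (-(Complex.I * (θ : ℂ)) * (L : ℂ)) * Bfun ρ z (g t)) atBot (nhds 0) := by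
    have h := (p2.add (lB2.const_mul (Complex.exp (-(Complex.I * (θ : ℂ)) * (L : ℂ))))).neg
    rw [mul_zero, add_zero, neg_zero] at h
    refine h.congr fun t => ?_
    have e1 : Complex.exp (Complex.I * ((-(θ * L + θ * Real.log (g t)) : ℝ) : ℂ))
        = Complex.exp (-(Complex.I * (θ : ℂ)) * (L : ℂ))
          * Complex.exp (-(Complex.I * θ) * ((Real.log (g t) : ℝ) : ℂ)) := by
      rw [← Complex.exp_add]; push_cast; ring_nf
    simp only [Function.comp_apply]
    rw [e1]; ring
  have hnorm : ∀ (f : ℝ → ℂ) (γ : ℂ) (s : ℝ → ℝ), ‖γ‖ ≤ 1 →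
      Tendsto (fun t => f t - γ * Complex.exp (Complex.I * ((s t : ℝ) : ℂ))) atBot (nhds 0) →
      ∀ᶠ t in atBot, ‖f t‖ ≤ 2 := by
    intro f γ s hγ hl
    have h1 := hl.norm
    rw [norm_zero] at h1
    filter_upwards [h1.eventually_le_const (show (0:ℝ) < 1 by norm_num)] with t ht
    have h2 : ‖γ * Complex.exp (Complex.I * ((s t : ℝ) : ℂ))‖ ≤ 1 := by
      rw [norm_mul, mul_comm Complex.I, Complex.norm_exp_ofReal_mul_I, mul_one]
      exact hγ
    have h3 := norm_add_le (f t - γ * Complex.exp (Complex.I * ((s t : ℝ) : ℂ)))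
      (γ * Complex.exp (Complex.I * ((s t : ℝ) : ℂ)))
    rw [sub_add_cancel] at h3
    linarith
  set c1 := Complex.exp (Complex.I * (θ : ℂ) * (L : ℂ)) with hc1
  set c2 := Complex.exp (-(Complex.I * (θ : ℂ)) * (L : ℂ)) with hc2
  have hgne : ∀ t, (g t : ℂ) ≠ 0 := fun t => by exact_mod_cast (hg t).ne'
  refine hH z hz U W (fun t => α * (c1 * Bfun ν z (g t)) + β * (c2 * Dfun ρ z (g t)))
    (fun t => α * (c1 * Dfun ν z (g t)) + β * (c2 * Bfun ρ z (g t))) hU hW ?_ ?_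
    (hnorm U α _ hα hUl) (hnorm W β _ hβ hWl) ?_ ?_
  · intro t
    have h := (((dB1 t).const_mul c1).const_mul α).add (((dD2 t).const_mul c2).const_mul β)
    refine h.congr_deriv ?_
    rw [n1, n2]
    have := hgne t
    simp only [Complex.real_smul]
    push_cast
    field_simp
    ring
  · intro t
    have h := (((dD1 t).const_mul c1).const_mul α).add (((dB2 t).const_mul c2).const_mul β)
    refine h.congr_deriv ?_
    rw [n1, n2]
    have := hgne t
    simp only [Complex.real_smul]
    push_cast
    field_simp
    ring
  · have h := (hUl.add (q1.const_mul α)).sub ((lD2.const_mul c2).const_mul β)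
    simp only [mul_zero, add_zero, sub_zero] at h
    refine h.congr fun t => ?_
    simp only [Function.comp_apply]
    ring
  · have h := (hWl.add (q2.const_mul β)).sub ((lD1.const_mul c1).const_mul α)
    simp only [mul_zero, add_zero, sub_zero] at h
    refine h.congr fun t => ?_
    simp only [Function.comp_apply]
    ring

lemma half_norm_aux (x y : ℂ) (B1 B2 : ℝ) (w : ℂ) (hw : ‖w‖ = 1) (hx : ‖x‖ ≤ B1) (hy : ‖y‖ ≤ B2) :
    ‖w * (x + y) / 2‖ ≤ B1 + B2 ∧ ‖w * (x - y) / 2‖ ≤ B1 + B2 := by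
  have h0 := norm_nonneg x
  have h1 := norm_nonneg y
  constructor
  · rw [norm_div, norm_mul, hw, Complex.norm_two]
    have := norm_add_le x y
    linarith
  · rw [norm_div, norm_mul, hw, Complex.norm_two]
    have := norm_sub_le x y
    linarith

lemma column_aux (a g ℓ b μ : ℝ → ℝ) (θ x1 C1 C2 κ L : ℝ) (hH1 : CoreBound a g ℓ μ θ x1 C1)
    (hH2 : CoreBound a g ℓ (fun t => -μ t) θ x1 C2) (hb : ∀ t, b t = a t * μ t)
    (hg : ∀ t, 0 < g t) (hg' : ∀ t, HasDerivAt g (a t) t) (hgl : Tendsto g atBot (nhds 0))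
    (hlog : Tendsto (fun t => Real.log (g t) - κ * t) atBot (nhds (-L)))
    (ν ρ : ℂ) (hν : ν = 1 / 2 - Complex.I * (θ : ℂ)) (hρ : ρ = 1 / 2 + Complex.I * (θ : ℂ))
    (z : ℂ) (hz : 1 ≤ ‖z‖) (u1 u2 v1 v2 : ℝ → ℂ) (e1 e2 f1 f2 : ℂ)
    (he1 : ‖e1 + e2‖ ≤ 1) (he2 : ‖e1 - e2‖ ≤ 1) (hf1 : ‖f1 - f2‖ ≤ 1) (hf2 : ‖f1 + f2‖ ≤ 1)
    (hu1 : ∀ t, HasDerivAt u1 (Complex.I * (ℓ t : ℂ) * u1 t + Complex.I * z * a t * v2 t - b t * v1 t) t)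
    (hu2 : ∀ t, HasDerivAt u2 (Complex.I * (ℓ t : ℂ) * u2 t - Complex.I * z * a t * v1 t + b t * v2 t) t)
    (hv1 : ∀ t, HasDerivAt v1 (-(Complex.I * (ℓ t : ℂ)) * v1 t + Complex.I * z * a t * u2 t - b t * u1 t) t)
    (hv2 : ∀ t, HasDerivAt v2 (-(Complex.I * (ℓ t : ℂ)) * v2 t - Complex.I * z * a t * u1 t + b t * u2 t) t)
    (lu1 : Tendsto (fun t => u1 t - e1 * Complex.exp (Complex.I * ((κ * θ * t : ℝ) : ℂ))) atBot (nhds 0))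
    (lu2 : Tendsto (fun t => u2 t - e2 * Complex.exp (Complex.I * ((κ * θ * t : ℝ) : ℂ))) atBot (nhds 0))
    (lv1 : Tendsto (fun t => v1 t - f1 * Complex.exp (Complex.I * ((-(κ * θ * t) : ℝ) : ℂ))) atBot (nhds 0))
    (lv2 : Tendsto (fun t => v2 t - f2 * Complex.exp (Complex.I * ((-(κ * θ * t) : ℝ) : ℂ))) atBot (nhds 0))
    (t : ℝ) (ht : t ≤ x1) :
    ‖u1 t - (e1 * (Complex.exp (Complex.I * (θ : ℂ) * (L : ℂ)) * Bfun ν z (g t))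
        + f2 * (Complex.I * Complex.exp (-(Complex.I * (θ : ℂ)) * (L : ℂ)) * Dfun ρ z (g t)))‖
          ≤ (C1 + C2) * Real.exp (|z.re| * g t) / ‖z‖ ∧
    ‖u2 t - (e2 * (Complex.exp (Complex.I * (θ : ℂ) * (L : ℂ)) * Bfun ν z (g t))
        - f1 * (Complex.I * Complex.exp (-(Complex.I * (θ : ℂ)) * (L : ℂ)) * Dfun ρ z (g t)))‖
          ≤ (C1 + C2) * Real.exp (|z.re| * g t) / ‖z‖ ∧
    ‖v1 t - (e2 * (Complex.I * Complex.exp (Complex.I * (θ : ℂ) * (L : ℂ)) * Dfun ν z (g t))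
        + f1 * (Complex.exp (-(Complex.I * (θ : ℂ)) * (L : ℂ)) * Bfun ρ z (g t)))‖
          ≤ (C1 + C2) * Real.exp (|z.re| * g t) / ‖z‖ ∧
    ‖v2 t - (-e1 * (Complex.I * Complex.exp (Complex.I * (θ : ℂ) * (L : ℂ)) * Dfun ν z (g t))
        + f2 * (Complex.exp (-(Complex.I * (θ : ℂ)) * (L : ℂ)) * Bfun ρ z (g t)))‖
          ≤ (C1 + C2) * Real.exp (|z.re| * g t) / ‖z‖ := by
  have hI := Complex.I_mul_I
  have hbc : ∀ t, (b t : ℂ) = (a t : ℂ) * (μ t : ℂ) := fun t => by rw [hb]; push_cast; ring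
  have hI1 : ‖-Complex.I‖ = 1 := by simp
  have m1 := model_aux a g ℓ μ θ x1 C1 κ L hH1 hg hg' hgl hlog ν ρ hν hρ z hz
    (fun t => u1 t + u2 t) (fun t => -Complex.I * (v1 t - v2 t)) (e1 + e2) (-Complex.I * (f1 - f2)) he1
    (by rw [norm_mul, hI1, one_mul]; exact hf1)
    (fun t => ((hu1 t).add (hu2 t)).congr_deriv (by
      rw [hbc]; push_cast
      linear_combination (-(a t : ℂ) * μ t * (v1 t - v2 t)) * hI))
    (fun t => (((hv1 t).sub (hv2 t)).const_mul (-Complex.I)).congr_deriv (by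
      rw [hbc]; push_cast
      linear_combination (-z * a t * (u1 t + u2 t)) * hI))
    (by
      have h := lu1.add lu2
      rw [add_zero] at h
      exact h.congr fun t => by ring)
    (by
      have h := (lv1.sub lv2).const_mul (-Complex.I)
      rw [sub_zero, mul_zero] at h
      exact h.congr fun t => by ring) t ht
  have m2 := model_aux a g ℓ (fun t => -μ t) θ x1 C2 κ L hH2 hg hg' hgl hlog ν ρ hν hρ z hz
    (fun t => u1 t - u2 t) (fun t => Complex.I * (v1 t + v2 t)) (e1 - e2) (Complex.I * (f1 + f2)) he2
    (by rw [norm_mul, Complex.norm_I, one_mul]; exact hf2)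
    (fun t => ((hu1 t).sub (hu2 t)).congr_deriv (by
      rw [hbc]; push_cast
      linear_combination (-(a t : ℂ) * μ t * (v1 t + v2 t)) * hI))
    (fun t => (((hv1 t).add (hv2 t)).const_mul (Complex.I)).congr_deriv (by
      rw [hbc]; push_cast
      linear_combination (-z * a t * (u1 t - u2 t)) * hI))
    (by
      have h := lu1.sub lu2
      rw [sub_zero] at h
      exact h.congr fun t => by ring)
    (by
      have h := (lv1.add lv2).const_mul (Complex.I)
      rw [add_zero, mul_zero] at h
      exact h.congr fun t => by ring) t ht
  obtain ⟨m1U, m1W⟩ := m1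
  obtain ⟨m2U, m2W⟩ := m2
  have hU := half_norm_aux _ _ _ _ 1 (by simp) m1U m2U
  have hW := half_norm_aux _ _ _ _ Complex.I (by simp) m1W m2W
  have hW' := half_norm_aux _ _ _ _ (-Complex.I) (by simp) m1W m2W
  have hsum : (C1 + C2) * Real.exp (|z.re| * g t) / ‖z‖ =
    C1 * Real.exp (|z.re| * g t) / ‖z‖ + C2 * Real.exp (|z.re| * g t) / ‖z‖ := by ring
  rw [hsum]
  refine ⟨le_of_eq_of_le ?_ hU.1, le_of_eq_of_le ?_ hU.2, le_of_eq_of_le ?_ hW.2, le_of_eq_of_le ?_ hW'.1⟩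
  · congr 1
    ring
  · congr 1
    ring
  · congr 1
    linear_combination (v1 t - f1 * (Complex.exp (-(Complex.I * (θ : ℂ)) * (L : ℂ)) * Bfun ρ z (g t))) * hI
  · congr 1
    linear_combination (v2 t - f2 * (Complex.exp (-(Complex.I * (θ : ℂ)) * (L : ℂ)) * Bfun ρ z (g t))) * hI

lemma gam_aux (N : Matrix (Fin 4) (Fin 4) ℂ) (j : Fin 4) :
    ((Gamma1 * N) 0 j = N 0 j ∧ (Gamma1 * N) 1 j = N 1 j ∧ (Gamma1 * N) 2 j = -N 2 j ∧ (Gamma1 * N) 3 j = -N 3 j) ∧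
    ((Gamma2 * N) 0 j = N 3 j ∧ (Gamma2 * N) 1 j = -N 2 j ∧ (Gamma2 * N) 2 j = -N 1 j ∧ (Gamma2 * N) 3 j = N 0 j) ∧
    ((Gamma0 * N) 0 j = -Complex.I * N 2 j ∧ (Gamma0 * N) 1 j = Complex.I * N 3 j ∧
      (Gamma0 * N) 2 j = Complex.I * N 0 j ∧ (Gamma0 * N) 3 j = -Complex.I * N 1 j) := by
  simp only [Matrix.mul_apply, Fin.sum_univ_four]
  refine ⟨⟨?_, ?_, ?_, ?_⟩, ⟨?_, ?_, ?_, ?_⟩, ⟨?_, ?_, ?_, ?_⟩⟩ <;> simp [Gamma1, Gamma2, Gamma0]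

lemma one_aux (j : Fin 4) :
    ‖(1 : Matrix (Fin 4) (Fin 4) ℂ) 0 j + (1 : Matrix (Fin 4) (Fin 4) ℂ) 1 j‖ ≤ 1 ∧
    ‖(1 : Matrix (Fin 4) (Fin 4) ℂ) 0 j - (1 : Matrix (Fin 4) (Fin 4) ℂ) 1 j‖ ≤ 1 ∧
    ‖(1 : Matrix (Fin 4) (Fin 4) ℂ) 2 j - (1 : Matrix (Fin 4) (Fin 4) ℂ) 3 j‖ ≤ 1 ∧
    ‖(1 : Matrix (Fin 4) (Fin 4) ℂ) 2 j + (1 : Matrix (Fin 4) (Fin 4) ℂ) 3 j‖ ≤ 1 := by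
  fin_cases j <;> simp [Matrix.one_apply]

lemma jost_ode_aux (a b c Cm : ℝ → ℝ) (lam : ℝ) (z : ℂ) (F : ℝ → Matrix (Fin 4) (Fin 4) ℂ)
    (h : IsJostRight a b c Cm lam z F) (j : Fin 4) :
    (∀ t, HasDerivAt (fun s => F s 0 j) (Complex.I * ((lam - c t : ℝ) : ℂ) * F t 0 j
      + Complex.I * z * a t * F t 3 j - b t * F t 2 j) t) ∧
    (∀ t, HasDerivAt (fun s => F s 1 j) (Complex.I * ((lam - c t : ℝ) : ℂ) * F t 1 j
      - Complex.I * z * a t * F t 2 j + b t * F t 3 j) t) ∧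
    (∀ t, HasDerivAt (fun s => F s 2 j) (-(Complex.I * ((lam - c t : ℝ) : ℂ)) * F t 2 j
      + Complex.I * z * a t * F t 1 j - b t * F t 0 j) t) ∧
    (∀ t, HasDerivAt (fun s => F s 3 j) (-(Complex.I * ((lam - c t : ℝ) : ℂ)) * F t 3 j
      - Complex.I * z * a t * F t 0 j + b t * F t 1 j) t) := by
  obtain ⟨hC, hE, -⟩ := h
  have hD : ∀ i t, HasDerivAt (fun s => F s i j) (deriv (fun s => F s i j) t) t := fun i t =>
    ((hC i j).differentiable (by norm_num) t).hasDerivAt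
  have hI := Complex.I_mul_I
  have hEE : ∀ i t, _ := fun i t => congrFun (congrFun (hE t) i) j
  refine ⟨fun t => (hD 0 t).congr_deriv ?_, fun t => (hD 1 t).congr_deriv ?_,
    fun t => (hD 2 t).congr_deriv ?_, fun t => (hD 3 t).congr_deriv ?_⟩
  · have e := hEE 0 t
    simp only [Matrix.add_apply, Matrix.sub_apply, Matrix.smul_apply, smul_eq_mul, gam_aux, matDeriv,
      Matrix.of_apply] at e
    push_cast
    linear_combination Complex.I * e + (deriv (fun s => F s 0 j) t + b t * F t 2 j) * hI
  · have e := hEE 1 t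
    simp only [Matrix.add_apply, Matrix.sub_apply, Matrix.smul_apply, smul_eq_mul, gam_aux, matDeriv,
      Matrix.of_apply] at e
    push_cast
    linear_combination Complex.I * e + (deriv (fun s => F s 1 j) t - b t * F t 3 j) * hI
  · have e := hEE 2 t
    simp only [Matrix.add_apply, Matrix.sub_apply, Matrix.smul_apply, smul_eq_mul, gam_aux, matDeriv,
      Matrix.of_apply] at e
    push_cast
    linear_combination -Complex.I * e + (deriv (fun s => F s 2 j) t + b t * F t 0 j) * hI
  · have e := hEE 3 t
    simp only [Matrix.add_apply, Matrix.sub_apply, Matrix.smul_apply, smul_eq_mul, gam_aux, matDeriv,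
      Matrix.of_apply] at e
    push_cast
    linear_combination -Complex.I * e + (deriv (fun s => F s 3 j) t - b t * F t 1 j) * hI

lemma jost_lim_aux (a b c Cm : ℝ → ℝ) (lam : ℝ) (z : ℂ) (F : ℝ → Matrix (Fin 4) (Fin 4) ℂ)
    (h : IsJostRight a b c Cm lam z F) (κ θ cm : ℝ) (hθ : lam - cm = κ * θ)
    (hCm : Tendsto (fun t => Cm t - cm * t) atBot (nhds 0)) (s : Fin 4 → ℝ) (hs : s = ![1, 1, -1, -1])
    (i j : Fin 4) :
    Tendsto (fun t => F t i j - (1 : Matrix (Fin 4) (Fin 4) ℂ) i j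
      * Complex.exp (Complex.I * ((s i * (κ * θ * t) : ℝ) : ℂ))) atBot (nhds 0) := by
  obtain ⟨-, -, hL⟩ := h
  have hexp : ∀ (w : ℂ) (i : Fin 4), (![Complex.exp w, Complex.exp w, Complex.exp (-w), Complex.exp (-w)] : Fin 4 → ℂ) i
      = Complex.exp (((s i : ℝ) : ℂ) * w) := by
    intro w i
    fin_cases i <;> simp [hs]
  have h1 : Tendsto (fun t => Complex.exp (Complex.I * ((s i * Cm t - s j * lam * t : ℝ) : ℂ)) * F t i j) atBot
      (nhds ((1 : Matrix (Fin 4) (Fin 4) ℂ) i j)) := by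
    refine (hL i j).congr fun t => ?_
    rw [expG1, expG1, Matrix.mul_diagonal, Matrix.diagonal_mul, hexp, hexp, mul_right_comm, ← Complex.exp_add]
    push_cast
    ring_nf
  by_cases hij : i = j
  · subst hij
    refine unimod_aux _ (fun t => s i * Cm t - s i * lam * t) _ _ ?_ h1
    have := hCm.const_mul (-s i)
    rw [mul_zero] at this
    refine this.congr fun t => ?_
    linear_combination (-s i * t) * hθ
  · rw [Matrix.one_apply_ne hij] at h1 ⊢
    have := unimod_aux _ _ (fun t => -(s i * Cm t - s j * lam * t)) _ (by simp) h1
    simpa using this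

/-- Asymptotics of the blocks of the Jost function from the right for
large `|z|`, uniformly on compact subsets of `(0,A)`:
`F_{R1} ≈ (κ₋/a₋)^{iθ}B_{ν₋}(z,X)I₂`, `F_{R2} ≈ i(κ₋/a₋)^{−iθ}D_{μ₋}(z,X)J`,
`F_{R3} ≈ i(κ₋/a₋)^{iθ}D_{ν₋}(z,X)J`, `F_{R4} ≈ (κ₋/a₋)^{−iθ}B_{μ₋}(z,X)I₂`,
with error `O(e^{|Re z|X}/|z|)`. -/
theorem stmt_15 (M Q Λ : ℝ) (hM : 0 < M) (hΛ : 0 < Λ)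
    (rn rc rm rp : ℝ) (hrn : rn < 0) (hrc : 0 < rc) (hrcm : rc < rm) (hrmp : rm < rp)
    (F : ℝ → ℝ)
    (hF : ∀ r, F r = 1 - 2 * M / r + Q ^ 2 / r ^ 2 - Λ * r ^ 2 / 3)
    (hFn : F rn = 0) (hFc : F rc = 0) (hFm : F rm = 0) (hFp : F rp = 0)
    (hFpos : ∀ r ∈ Set.Ioo rm rp, 0 < F r)
    (κn κc κm κp : ℝ)
    (hκn : κn = deriv F rn / 2) (hκc : κc = deriv F rc / 2)
    (hκm : κm = deriv F rm / 2) (hκp : κp = deriv F rp / 2)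
    (hκmpos : 0 < κm) (hκpneg : κp < 0)
    (x : ℝ → ℝ)
    (hx : ∀ r, x r = 1 / (2 * κn) * Real.log (r - rn) + 1 / (2 * κc) * Real.log (r - rc)
      + 1 / (2 * κm) * Real.log (r - rm) + 1 / (2 * κp) * Real.log (rp - r))
    (rfun : ℝ → ℝ)
    (hrmem : ∀ s, rfun s ∈ Set.Ioo rm rp) (hrinv : ∀ s, x (rfun s) = s)
    (m q : ℝ) (a b c : ℝ → ℝ)
    (ha : ∀ s, a s = Real.sqrt (F (rfun s)) / rfun s)
    (hb : ∀ s, b s = m * Real.sqrt (F (rfun s)))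
    (hc : ∀ s, c s = q * Q / rfun s)
    (cm cp : ℝ) (hcm : cm = q * Q / rm) (hcp : cp = q * Q / rp)
    (am : ℝ) (ham : 0 < am)
    (haas : (fun s => a s - am * Real.exp (κm * s)) =O[atBot] fun s => Real.exp (3 * κm * s))
    (haint : Integrable a)
    (A : ℝ) (hA : A = ∫ s, a s) (hApos : 0 < A)
    (g : ℝ → ℝ) (hg : ∀ t, g t = ∫ s in Set.Iic t, a s)
    (hfun : ℝ → ℝ) (hgh : ∀ t, hfun (g t) = t)
    (hhg : ∀ X ∈ Set.Ioo (0 : ℝ) A, g (hfun X) = X)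
    (lam : ℝ)
    (Cminus : ℝ → ℝ)
    (hCminus : ∀ t, Cminus t = (∫ s in Set.Iic t, (c s - cm)) + cm * t)
    (θ : ℝ) (hθ : θ = (lam - cm) / κm)
    (νm μm : ℂ)
    (hνm : νm = 1 / 2 - Complex.I * (θ : ℂ)) (hμm : μm = 1 / 2 + Complex.I * (θ : ℂ))
    (FR : ℂ → ℝ → Matrix (Fin 4) (Fin 4) ℂ)
    (hJost : ∀ z : ℂ, IsJostRight a b c Cminus lam z (FR z)) :
    ∀ X₀ X₁ : ℝ, 0 < X₀ → X₀ ≤ X₁ → X₁ < A →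
      ∃ C > (0 : ℝ), ∃ R > (0 : ℝ), ∀ z : ℂ, R ≤ ‖z‖ →
        ∀ X ∈ Set.Icc X₀ X₁,
          mnorm2 (blk (FR z (hfun X)) 0 0
              - (Complex.exp (Complex.I * (θ : ℂ) * ((Real.log (κm / am) : ℝ) : ℂ))
                  * Bfun νm z X) • (1 : Matrix (Fin 2) (Fin 2) ℂ))
            ≤ C * Real.exp (|z.re| * X) / ‖z‖ ∧
          mnorm2 (blk (FR z (hfun X)) 0 1
              - (Complex.I * Complex.exp (-(Complex.I * (θ : ℂ)) * ((Real.log (κm / am) : ℝ) : ℂ))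
                  * Dfun μm z X) • Jmat)
            ≤ C * Real.exp (|z.re| * X) / ‖z‖ ∧
          mnorm2 (blk (FR z (hfun X)) 1 0
              - (Complex.I * Complex.exp (Complex.I * (θ : ℂ) * ((Real.log (κm / am) : ℝ) : ℂ))
                  * Dfun νm z X) • Jmat)
            ≤ C * Real.exp (|z.re| * X) / ‖z‖ ∧
          mnorm2 (blk (FR z (hfun X)) 1 1
              - (Complex.exp (-(Complex.I * (θ : ℂ)) * ((Real.log (κm / am) : ℝ) : ℂ))
                  * Bfun μm z X) • (1 : Matrix (Fin 2) (Fin 2) ℂ))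
            ≤ C * Real.exp (|z.re| * X) / ‖z‖ := by
  intro X₀ X₁ hX0 hX01 hX1A
  obtain ⟨hfac, hxd⟩ := x_deriv_aux M Q Λ hΛ rn rc rm rp hrn hrc hrcm hrmp F hF hFn hFc hFm hFp
    κn κc κm κp hκn hκc hκm hκp x hx
  obtain ⟨hrmono, hr', hrl⟩ := r_aux F x rfun rm rp hFpos hxd hrmem hrinv
  have hrm0 : 0 < rm := hrc.trans hrcm
  have hr0 : ∀ t, 0 < rfun t := fun t => hrm0.trans (hrmem t).1
  set x1 := hfun X₁ with hx1
  obtain ⟨k, δ, hδ, K, hK, hapos, hF2, ha', hal, hd, hk, hkb, hcb⟩ := conc_aux M Q Λ hΛ rn rc rm rp hrn hrc hrcm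
    hrmp F hF hFm hFpos hfac κm hκm rfun hrmem hrmono hr' hrl (q * Q) a c ha hc cm hcm x1
  have hacont : Continuous a := continuous_iff_continuousAt.mpr fun t => (ha' t).continuousAt
  obtain ⟨hg', hgpos, hgA, hgl, hgmono⟩ := g_aux a g hapos hacont haint hg
  have hr2 : ∀ t, HasDerivAt rfun (a t ^ 2 * rfun t ^ 2) t := fun t => by
    rw [← hF2]; exact hr' t
  obtain ⟨C0, hC0, hall⟩ := gbounds_aux rfun a g k c rm κm cm δ K x1 hrm0 hκmpos hδ hK (fun t => (hrmem t).1) hr2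
    hrl hapos ha' hal hgpos hg' hgl hd hk hkb hcb
  have hθ2 : lam - cm = κm * θ := by rw [hθ]; field_simp
  obtain ⟨p, p', Kp, hKp, hpd, hpl, hpb⟩ := pbounds_aux rfun a g k c κm cm (q * Q) θ lam C0 x1 (∫ s, a s)
    hκmpos hC0 hr0 hr2 hapos ha' hgpos hg' hgA hc hθ2 hall
  have hlog := glog_aux a g κm am C0 x1 hκmpos ham hapos hgpos hgl haas (fun t ht => (hall t ht).2.2.1)
  rw [show am / κm = (κm / am)⁻¹ by rw [inv_div], Real.log_inv] at hlog
  have hrp0 : 0 < rp := hrm0.trans hrmp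
  set AA := ∫ s, a s with hAA
  have hAA0 : 0 < AA := (hgpos 0).trans_le (hgA 0)
  set K2 := Kp + |m| * rp + |m| * rp ^ 2 * (C0 * AA) with hK2
  have hK20 : 0 ≤ K2 := by positivity
  have n1 : 0 ≤ |m| * rp := by positivity
  have n2 : 0 ≤ |m| * rp ^ 2 * (C0 * AA) := by positivity
  have hmr : ∀ t ≤ x1, |m * rfun t| ≤ K2 := by
    intro t _
    rw [abs_mul, abs_of_pos (hr0 t)]
    have := mul_le_mul_of_nonneg_left (hrmem t).2.le (abs_nonneg m)
    linarith
  have hmr2 : ∀ t ≤ x1, |m * (a t ^ 2 * rfun t ^ 2)| ≤ K2 * a t := by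
    intro t ht
    have a0 := hapos t
    have r0 := hr0 t
    have h1 : a t ≤ C0 * AA := (hall t ht).1.trans (mul_le_mul_of_nonneg_left (hgA t) hC0.le)
    have h2 : rfun t ^ 2 ≤ rp ^ 2 := pow_le_pow_left₀ r0.le (hrmem t).2.le 2
    rw [abs_mul, abs_of_pos (show 0 < a t ^ 2 * rfun t ^ 2 by positivity)]
    calc |m| * (a t ^ 2 * rfun t ^ 2) = |m| * rfun t ^ 2 * a t * a t := by ring
      _ ≤ |m| * rp ^ 2 * (C0 * AA) * a t := by gcongr
      _ ≤ K2 * a t := by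
        apply mul_le_mul_of_nonneg_right _ a0.le
        linarith
  have hKK : Kp ≤ K2 := by linarith
  obtain ⟨C1, hC1, hH1⟩ := core_aux a g (fun t => m * rfun t) (fun t => m * (a t ^ 2 * rfun t ^ 2)) p p'
    (fun t => lam - c t) θ x1 K2 AA hapos hg' hgpos hgA hK20 (fun t => (hr2 t).const_mul m) hpd hpl hmr hmr2
    (fun t ht => (hpb t ht).1.trans hKK)
    (fun t ht => (hpb t ht).2.1.trans (mul_le_mul_of_nonneg_right hKK (hgpos t).le))
    (fun t ht => (hpb t ht).2.2.trans (mul_le_mul_of_nonneg_right hKK (hapos t).le))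
  obtain ⟨C2, hC2, hH2⟩ := core_aux a g (fun t => -(m * rfun t)) (fun t => -(m * (a t ^ 2 * rfun t ^ 2))) p p'
    (fun t => lam - c t) θ x1 K2 AA hapos hg' hgpos hgA hK20 (fun t => ((hr2 t).const_mul m).neg) hpd hpl
    (fun t ht => by rw [abs_neg]; exact hmr t ht) (fun t ht => by rw [abs_neg]; exact hmr2 t ht)
    (fun t ht => (hpb t ht).1.trans hKK)
    (fun t ht => (hpb t ht).2.1.trans (mul_le_mul_of_nonneg_right hKK (hgpos t).le))
    (fun t ht => (hpb t ht).2.2.trans (mul_le_mul_of_nonneg_right hKK (hapos t).le))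
  have hCm : Tendsto (fun t => Cminus t - cm * t) atBot (nhds 0) := by
    have h : Tendsto (fun t : ℝ => ∫ s in Set.Iic t, (c s - cm)) atBot (nhds 0) :=
      MeasureTheory.tendsto_integral_Iic_zero tendsto_id
    refine h.congr fun t => ?_
    rw [hCminus]; ring
  have hbμ : ∀ t, b t = a t * (m * rfun t) := by
    intro t
    have := (hr0 t).ne'
    rw [hb, ha]
    field_simp
  refine ⟨C1 + C2, by positivity, 1, one_pos, ?_⟩
  intro z hz X hX
  have hXmem : X ∈ Set.Ioo 0 A := ⟨hX0.trans_le hX.1, hX.2.trans_lt hX1A⟩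
  have hX1mem : X₁ ∈ Set.Ioo 0 A := ⟨hX0.trans_le hX01, hX1A⟩
  have hgX : g (hfun X) = X := hhg X hXmem
  have htx : hfun X ≤ x1 := by
    rw [← hgmono.le_iff_le, hgX, hx1, hhg X₁ hX1mem]
    exact hX.2
  have hcol : ∀ j : Fin 4, _ := fun j =>
    column_aux a g (fun t => lam - c t) b (fun t => m * rfun t) θ x1 C1 C2 κm (Real.log (κm / am)) hH1 hH2 hbμ
      hgpos hg' hgl hlog νm μm hνm hμm z hz (fun t => FR z t 0 j) (fun t => FR z t 1 j) (fun t => FR z t 2 j)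
      (fun t => FR z t 3 j) ((1 : Matrix (Fin 4) (Fin 4) ℂ) 0 j) ((1 : Matrix (Fin 4) (Fin 4) ℂ) 1 j)
      ((1 : Matrix (Fin 4) (Fin 4) ℂ) 2 j) ((1 : Matrix (Fin 4) (Fin 4) ℂ) 3 j)
      (one_aux j).1 (one_aux j).2.1 (one_aux j).2.2.1 (one_aux j).2.2.2
      (jost_ode_aux a b c Cminus lam z (FR z) (hJost z) j).1
      (jost_ode_aux a b c Cminus lam z (FR z) (hJost z) j).2.1
      (jost_ode_aux a b c Cminus lam z (FR z) (hJost z) j).2.2.1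
      (jost_ode_aux a b c Cminus lam z (FR z) (hJost z) j).2.2.2
      (by simpa using jost_lim_aux a b c Cminus lam z (FR z) (hJost z) κm θ cm hθ2 hCm _ rfl 0 j)
      (by simpa using jost_lim_aux a b c Cminus lam z (FR z) (hJost z) κm θ cm hθ2 hCm _ rfl 1 j)
      (by simpa using jost_lim_aux a b c Cminus lam z (FR z) (hJost z) κm θ cm hθ2 hCm _ rfl 2 j)
      (by simpa using jost_lim_aux a b c Cminus lam z (FR z) (hJost z) κm θ cm hθ2 hCm _ rfl 3 j)
      (hfun X) htx
  simp only [hgX] at hcol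
  obtain ⟨a00, a10, a20, a30⟩ := hcol 0
  obtain ⟨a01, a11, a21, a31⟩ := hcol 1
  obtain ⟨a02, a12, a22, a32⟩ := hcol 2
  obtain ⟨a03, a13, a23, a33⟩ := hcol 3
  have hm : ∀ (N : Matrix (Fin 2) (Fin 2) ℂ) (T : ℝ), ‖N 0 0‖ ≤ T → ‖N 0 1‖ ≤ T → ‖N 1 0‖ ≤ T → ‖N 1 1‖ ≤ T →
      mnorm2 N ≤ T := fun N T h1 h2 h3 h4 => max_le (max_le h1 h2) (max_le h3 h4)
  refine ⟨hm _ _ ?_ ?_ ?_ ?_, hm _ _ ?_ ?_ ?_ ?_, hm _ _ ?_ ?_ ?_ ?_, hm _ _ ?_ ?_ ?_ ?_⟩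
  · simpa [blk, Jmat, Matrix.one_apply] using a00
  · simpa [blk, Jmat, Matrix.one_apply] using a01
  · simpa [blk, Jmat, Matrix.one_apply] using a10
  · simpa [blk, Jmat, Matrix.one_apply] using a11
  · simpa [blk, Jmat, Matrix.one_apply] using a02
  · simpa [blk, Jmat, Matrix.one_apply] using a03
  · simpa [blk, Jmat, Matrix.one_apply] using a12
  · simpa [blk, Jmat, Matrix.one_apply] using a13
  · simpa [blk, Jmat, Matrix.one_apply] using a20
  · simpa [blk, Jmat, Matrix.one_apply] using a21
  · simpa [blk, Jmat, Matrix.one_apply] using a30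
  · simpa [blk, Jmat, Matrix.one_apply] using a31
  · simpa [blk, Jmat, Matrix.one_apply] using a22
  · simpa [blk, Jmat, Matrix.one_apply] using a23
  · simpa [blk, Jmat, Matrix.one_apply] using a32
  · simpa [blk, Jmat, Matrix.one_apply] using a33
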